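/- arXiv:2406.19857 — 2 statements merged into one kernel-verified Lean document; each statement's English description precedes it below -/
import Mathlib

section
/- In the abelian category Sh(G) of sheaves of ℚ-vector spaces on G = SU(2), one has Ext^n_{Sh(G)}(i_*ℚ, K) ≅ ℚ for n ∈ {1, 3}, and Ext^n_{Sh(G)}(i_*ℚ, K) = 0 for all other integers n. -/
open CategoryTheory TopologicalSpace Limits

noncomputable section

/-- The special unitary group `SU(2)`, as the kernel of the determinant on the unitary group
of 2×2 complex matrices. -/
abbrev SU2 : Subgroup (Matrix.unitaryGroup (Fin 2) ℂ) :=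
  MonoidHom.ker (Matrix.detMonoidHom.comp (Matrix.unitaryGroup (Fin 2) ℂ).subtype)

/-- `SU(2)` as a topological space. -/
abbrev GTop : TopCat := TopCat.of SU2

/-- The category of sheaves of `ℚ`-vector spaces on `SU(2)`. -/
abbrev ShG : Type _ := Sheaf (Opens.grothendieckTopology GTop) (ModuleCat.{0} ℚ)

attribute [local instance] Classical.propDecidable

/-- The constant sheaf `ℚ_G` on `SU(2)`. -/
def QG : ShG :=
  (constantSheaf (Opens.grothendieckTopology GTop) (ModuleCat.{0} ℚ)).obj (ModuleCat.of ℚ ℚ)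

/-- The skyscraper sheaf `i_* ℚ` at the identity element of `SU(2)`. -/
def skyQ : ShG := skyscraperSheaf (X := GTop) (1 : SU2) (ModuleCat.of ℚ ℚ)

/-- The unit `ℚ_G ⟶ i_* i^* ℚ_G` of the stalk/skyscraper adjunction at the identity. -/
def unitQG := (stalkSkyscraperSheafAdjunction (C := ModuleCat.{0} ℚ) (X := GTop)
  (1 : SU2)).unit.app QG

/-- `K` is the kernel of the unit `ℚ_G ⟶ i_* i^* ℚ_G`; equivalently, the extension by zero
of the constant sheaf `ℚ` on `SU(2) ∖ {1}`. -/
def KK : ShG := kernel unitQG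

instance : HasDerivedCategory ShG := HasDerivedCategory.standard _
instance : HasExt.{1} ShG := hasExt_of_hasDerivedCategory _

/-!
The skyscraper sheaf `T = i_*ℚ` is injective, so the short exact sequence `0 ⟶ K ⟶ ℚ_G ⟶ T ⟶ 0`
reduces everything to `Ext^n(T, ℚ_G) = ℚ` for `n = 3` and `0` otherwise: the class in degree one
comes from `Hom(T, T) = ℚ`.

In a chart `ψ : ℝ^ι ⟶ X`, write `k_Z` for the constant sheaf on a locally closed `Z`, extended by
zero. Sections of `k_X` over open boxes extend to `X`; for sheaves with this property, sections
over boxes lift along epimorphisms, by gluing along subdivisions of closed boxes and exhausting the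
open box by closed ones. Hence `Ext^n(k_B, k_X) = H^n(B, k) = 0` for boxes `B` and `n > 0`, while
`Ext^0(k_B, k_X) = k`. The sequences `0 ⟶ k_{Z'} ⟶ k_Z ⟶ k_{Z \ Z'} ⟶ 0` with `Z'` open in `Z`
show first that `Ext(k_Z, k_X)` vanishes when one factor of the box is replaced by a half-open
interval `[v, b)`, and then, writing `{v} = [v, b) \ (v, b)`, that shrinking one factor to a point
shifts `Ext` by one degree. Shrinking all of them reaches the skyscraper sheaf `k_{ψ v}`.
-/

open Opposite Topology

universe w v u

/-! ### Vanishing and concentration of Ext groups -/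

section Ext

open Abelian

variable {C : Type u} [Category.{v} C] [Abelian C] [HasExt.{w} C]

/-- All the groups `Ext^n(T, Y)` vanish. -/
def ExtVanishes (T Y : C) : Prop := ∀ n, Subsingleton (Ext T Y n)

/-- The groups `Ext^n(T, Y)` vanish except for `n = d`, where the group is isomorphic to `A`. -/
def ExtConcentrated (A : Type*) [AddCommGroup A] (d : ℕ) (T Y : C) : Prop :=
  Nonempty (Ext T Y d ≃+ A) ∧ ∀ n ≠ d, Subsingleton (Ext T Y n)

variable {A : Type*} [AddCommGroup A]

lemma ExtConcentrated.of_iso {d : ℕ} {T T' Y Y' : C} (h : ExtConcentrated A d T Y)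
    (e : T ≅ T') (f : Y ≅ Y') : ExtConcentrated A d T' Y' := by
  have eqv (n : ℕ) : Nonempty (Ext T' Y' n ≃+ Ext T Y n) :=
    ⟨(((extFunctor n).mapIso e.op).app Y' ≪≫
      ((extFunctor n).obj (op T)).mapIso f.symm).addCommGroupIsoToAddEquiv⟩
  refine ⟨⟨(eqv d).some.trans h.1.some⟩, fun n hn => ?_⟩
  have := h.2 n hn
  exact (eqv n).some.toEquiv.subsingleton

section ShortExact

variable {S : ShortComplex C} (hS : S.ShortExact) {Y : C}
include hS

lemma ExtVanishes.of_bijective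
    (h : ∀ n, Function.Bijective
      fun x : Ext S.X₂ Y n => (Ext.mk₀ S.f).comp x (zero_add n)) :
    ExtVanishes S.X₃ Y := by
  refine fun n => subsingleton_of_forall_eq 0 fun x => ?_
  have hgx : (Ext.mk₀ S.g).comp x (zero_add n) = 0 := (h n).1 <| by
    simp only [Ext.mk₀_comp_mk₀_assoc, S.zero, Ext.mk₀_zero, Ext.zero_comp, Ext.comp_zero]
  cases n with
  | zero =>
    have := hS.epi_g
    exact Ext.precomp_mk₀_injective_of_epi Y S.g
      (hgx.trans (Ext.comp_zero _ _ _ _ (zero_add 0)).symm)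
  | succ n =>
    obtain ⟨y, rfl⟩ := Ext.contravariant_sequence_exact₃ hS Y x hgx (add_comm 1 n)
    obtain ⟨z, rfl⟩ := (h n).2 y
    exact hS.extClass_comp_assoc _

lemma ExtVanishes.third (h₁ : ExtVanishes S.X₁ Y) (h₂ : ExtVanishes S.X₂ Y) :
    ExtVanishes S.X₃ Y :=
  .of_bijective hS fun n =>
    ⟨fun _ _ _ => (h₂ n).elim _ _, fun y => ⟨0, (h₁ n).elim _ y⟩⟩

lemma ExtConcentrated.succ {d : ℕ} (h₁ : ExtConcentrated A d S.X₁ Y)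
    (h₂ : ExtVanishes S.X₂ Y) : ExtConcentrated A (d + 1) S.X₃ Y := by
  have bij (n : ℕ) : Function.Bijective (hS.extClass.precomp Y (add_comm 1 n)) := by
    refine ⟨(injective_iff_map_eq_zero _).2 fun x hx => ?_, fun x =>
      Ext.contravariant_sequence_exact₃ hS Y x ((h₂ _).elim _ _) (add_comm 1 n)⟩
    obtain ⟨y, rfl⟩ := Ext.contravariant_sequence_exact₁ hS Y x (add_comm 1 n) hx
    rw [(h₂ n).elim y 0, Ext.comp_zero]
  have e (n : ℕ) : Ext S.X₁ Y n ≃+ Ext S.X₃ Y (n + 1) := AddEquiv.ofBijective _ (bij n)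
  refine ⟨⟨(e d).symm.trans h₁.1.some⟩, fun n hn => ?_⟩
  cases n with
  | zero =>
    have := hS.epi_g
    have := h₂ 0
    exact (Ext.precomp_mk₀_injective_of_epi Y S.g).subsingleton
  | succ n =>
    have := h₁.2 n (by lia)
    exact (e n).symm.toEquiv.subsingleton

lemma nonempty_ext_succ_addEquiv_of_injective [Injective S.X₃] (T : C) (n : ℕ) :
    Nonempty (Ext T S.X₁ (n + 2) ≃+ Ext T S.X₂ (n + 2)) := by
  have vanish (m : ℕ) : Subsingleton (Ext T S.X₃ (m + 1)) := Ext.subsingleton_of_injective _ _ _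
  refine ⟨.ofBijective ((Ext.mk₀ S.f).postcomp T (add_zero (n + 2)))
    ⟨(injective_iff_map_eq_zero _).2 fun x hx => ?_, fun x =>
      Ext.covariant_sequence_exact₂ _ hS x ((vanish _).elim _ _)⟩⟩
  obtain ⟨y, rfl⟩ := Ext.covariant_sequence_exact₁ _ hS x hx (n₀ := n + 1) rfl
  rw [(vanish n).elim y 0, Ext.zero_comp]

lemma nonempty_ext_one_addEquiv_hom {T : C} (h₀ : Subsingleton (Ext T S.X₂ 0))
    (h₁ : Subsingleton (Ext T S.X₂ 1)) : Nonempty (Ext T S.X₁ 1 ≃+ (T ⟶ S.X₃)) := by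
  refine ⟨(AddEquiv.ofBijective (hS.extClass.postcomp T (zero_add 1))
    ⟨(injective_iff_map_eq_zero _).2 fun x hx => ?_, fun x =>
      Ext.covariant_sequence_exact₁ _ hS x (h₁.elim _ _) (zero_add 1)⟩).symm.trans Ext.addEquiv₀⟩
  obtain ⟨y, rfl⟩ := Ext.covariant_sequence_exact₃ _ hS x (zero_add 1) hx
  rw [h₀.elim y 0, Ext.zero_comp]

theorem ExtConcentrated.ext_first_of_injective {d : ℕ} (hd : 2 ≤ d) {T : C}
    (h : ExtConcentrated A d T S.X₂) [Injective S.X₃] :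
    Nonempty (Ext T S.X₁ 1 ≃+ (T ⟶ S.X₃)) ∧ Nonempty (Ext T S.X₁ d ≃+ A) ∧
      ∀ n, n ≠ 1 → n ≠ d → Subsingleton (Ext T S.X₁ n) := by
  have shift := nonempty_ext_succ_addEquiv_of_injective hS T
  refine ⟨nonempty_ext_one_addEquiv_hom hS (h.2 0 (by lia)) (h.2 1 (by lia)), ?_, ?_⟩
  · obtain ⟨n, rfl⟩ := Nat.exists_eq_add_of_le' hd
    exact ⟨(shift n).some.trans h.1.some⟩
  · rintro (_ | _ | n) h1 hn
    · have := hS.mono_f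
      have := h.2 0 hn
      exact (Ext.postcomp_mk₀_injective_of_mono T S.f).subsingleton
    · exact absurd rfl h1
    · have := h.2 _ hn
      exact (shift n).some.toEquiv.subsingleton

end ShortExact

theorem subsingleton_ext_succ_of_quotient [EnoughInjectives C] (T : C) (P : C → Prop)
    (quotient : ∀ S : ShortComplex C, S.ShortExact → Injective S.X₂ → P S.X₁ → P S.X₃)
    (lift : ∀ S : ShortComplex C, S.ShortExact → P S.X₁ →
      ∀ φ : T ⟶ S.X₃, ∃ χ : T ⟶ S.X₂, χ ≫ S.g = φ)
    {F : C} (hF : P F) (n : ℕ) : Subsingleton (Ext T F (n + 1)) := by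
  induction n using Nat.strong_induction_on generalizing F with | _ n ih
  let S := ShortComplex.mk (Injective.ι F) (cokernel.π (Injective.ι F)) (cokernel.condition _)
  have hS : S.ShortExact := { exact := ShortComplex.exact_cokernel _ }
  have hI : Injective S.X₂ := Injective.injective_under F
  refine subsingleton_of_forall_eq 0 fun x => ?_
  obtain ⟨y, rfl⟩ := Ext.covariant_sequence_exact₁ _ hS x
    (Ext.eq_zero_of_injective (I := S.X₂) _) rfl
  cases n with
  | zero =>
    obtain ⟨φ, rfl⟩ := (Ext.mk₀_bijective _ _).2 y
    obtain ⟨χ, rfl⟩ := lift S hS hF φ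
    rw [← Ext.mk₀_comp_mk₀, Ext.comp_assoc_of_second_deg_zero, hS.comp_extClass, Ext.comp_zero]
  | succ n => rw [(ih n n.lt_succ_self (quotient S hS hI hF)).elim y 0, Ext.zero_comp]

end Ext

lemma Icc_additive_induction {P : ℝ → ℝ → Prop} {a b : ℝ} (hab : a ≤ b)
    (join : ∀ x y z, P x y → P y z → P x z)
    (near : ∀ t ∈ Set.Icc a b, ∃ V ∈ 𝓝 t, ∀ x ∈ V, ∀ y ∈ V, P x y) : P a b := by
  choose V hV hP using fun t : Set.Icc a b => near t t.2
  obtain ⟨τ, h₀, mono, ⟨n, hn⟩, hτ⟩ := exists_monotone_Icc_subset_open_cover_Icc hab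
    (c := fun t => ((↑) : Set.Icc a b → ℝ) ⁻¹' interior (V t))
    (fun t => isOpen_interior.preimage continuous_subtype_val)
    (fun t _ => Set.mem_iUnion.2 ⟨t, mem_interior_iff_mem_nhds.2 (hV t)⟩)
  have step (m : ℕ) : P (τ m) (τ (m + 1)) := by
    obtain ⟨t, ht⟩ := hτ m
    exact hP t _ (interior_subset (ht ⟨le_rfl, mono m.le_succ⟩)) _
      (interior_subset (ht ⟨mono m.le_succ, le_rfl⟩))
  have key (m : ℕ) : P (τ 0) (τ (m + 1)) := by
    induction m with
    | zero => exact step 0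
    | succ m ih => exact join _ _ _ ih (step _)
  have := key n
  rwa [h₀, hn _ n.le_succ] at this

lemma Ioo_sdiff_Ioo_left {a b c : ℝ} (h : a < c) :
    Set.Ioo a b \ Set.Ioo a c = Set.Ico c b := by
  ext x
  grind

/-- Sheaves of `k`-modules on a topological space. -/
abbrev ModSheaf (k : Type u) [CommRing k] (X : TopCat.{u}) : Type _ :=
  Sheaf (Opens.grothendieckTopology X) (ModuleCat.{u} k)

namespace ModSheaf

variable {k : Type u} [CommRing k] {X : TopCat.{u}}

/-- The module of sections of a sheaf over an open set. -/
abbrev sections (F : ModSheaf k X) (U : Opens X) : Type u := F.obj.obj (op U)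

/-- The restriction maps of a sheaf of modules, as linear maps. -/
def res (F : ModSheaf k X) {U V : Opens X} (h : V ≤ U) : F.sections U →ₗ[k] F.sections V :=
  (F.obj.map (homOfLE h).op).hom

/-- The action of a morphism of sheaves on sections, as a linear map. -/
def app {F G : ModSheaf k X} (a : F ⟶ G) (U : Opens X) : F.sections U →ₗ[k] G.sections U :=
  (a.hom.app (op U)).hom

lemma res_res (F : ModSheaf k X) {U V W : Opens X} (h : V ≤ U) (h' : W ≤ V)
    (s : F.sections U) : F.res h' (F.res h s) = F.res (h'.trans h) s :=
  (ConcreteCategory.congr_hom (F.obj.map_comp (homOfLE h).op (homOfLE h').op) s).symm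

lemma res_refl (F : ModSheaf k X) {U : Opens X} (s : F.sections U) : F.res le_rfl s = s :=
  ConcreteCategory.congr_hom (F.obj.map_id (op U)) s

lemma app_res {F G : ModSheaf k X} (a : F ⟶ G) {U V : Opens X} (h : V ≤ U)
    (s : F.sections U) : app a V (F.res h s) = G.res h (app a U s) :=
  ConcreteCategory.congr_hom (a.hom.naturality (homOfLE h).op) s

lemma app_comp {F G H : ModSheaf k X} (a : F ⟶ G) (b : G ⟶ H) (U : Opens X)
    (s : F.sections U) : app (a ≫ b) U s = app b U (app a U s) :=
  rfl

lemma hom_ext {F G : ModSheaf k X} {a b : F ⟶ G} (h : ∀ U s, app a U s = app b U s) : a = b :=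
  Sheaf.hom_ext (by ext U s; exact h U.unop s)

lemma section_ext (F : ModSheaf k X) {ι : Type*} {U : ι → Opens X} {V : Opens X}
    (hU : ∀ i, U i ≤ V) (hV : V ≤ iSup U) {s t : F.sections V}
    (h : ∀ i, F.res (hU i) s = F.res (hU i) t) : s = t :=
  TopCat.Sheaf.eq_of_locally_eq' F U V (fun i => homOfLE (hU i)) hV s t h

lemma section_ext_of_locally (F : ModSheaf k X) {U : Opens X} {s t : F.sections U}
    (h : ∀ x ∈ U, ∃ (V : Opens X) (hV : V ≤ U), x ∈ V ∧ F.res hV s = F.res hV t) : s = t := by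
  choose V hV hx hst using fun x : U => h x x.2
  exact F.section_ext hV (fun x hxU => Opens.mem_iSup.2 ⟨⟨x, hxU⟩, hx _⟩) hst

lemma exists_glue (F : ModSheaf k X) {ι : Type*} {U : ι → Opens X} {V : Opens X}
    (hU : ∀ i, U i ≤ V) (hV : V ≤ iSup U) (s : ∀ i, F.sections (U i))
    (h : ∀ i j, F.res inf_le_left (s i) = F.res (inf_le_right : U i ⊓ U j ≤ U j) (s j)) :
    ∃ t : F.sections V, ∀ i, F.res (hU i) t = s i :=
  (TopCat.Sheaf.existsUnique_gluing' F U V (fun i => homOfLE (hU i)) hV s h).exists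

lemma epi_iff_locally_surjective {F G : ModSheaf k X} (a : F ⟶ G) :
    Epi a ↔ ∀ (U : Opens X) (t : G.sections U), ∀ x ∈ U,
      ∃ (V : Opens X) (hV : V ≤ U), x ∈ V ∧ ∃ s, app a V s = G.res hV t := by
  refine (TopCat.Sheaf.isLocallySurjective_iff_epi (F := F) (G := G) a).symm.trans ?_
  rw [TopCat.Presheaf.isLocallySurjective_iff]
  constructor
  · intro h U t x hx
    obtain ⟨V, hV, ⟨s, hs⟩, hxV⟩ := h U t x hx
    exact ⟨V, hV, hxV, s, hs⟩
  · intro h U t x hx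
    obtain ⟨V, hV, hxV, s, hs⟩ := h U t x hx
    exact ⟨V, hV, ⟨s, hs⟩, hxV⟩

lemma mono_of_injective {F G : ModSheaf k X} (a : F ⟶ G)
    (h : ∀ U, Function.Injective (app a U)) : Mono a :=
  Sheaf.mono_of_injective a fun U => h U.unop

open TopCat.Presheaf in
lemma exact_of_sections {S : ShortComplex (ModSheaf k X)}
    (h : ∀ (U : Opens X) (s : S.X₂.sections U), app S.g U s = 0 → ∃ r, app S.f U r = s) :
    S.Exact := by
  refine (TopCat.Sheaf.exact_iff_stalkFunctor_map_exact (C := ModuleCat.{u} k) S).2 fun x => ?_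
  rw [ShortComplex.moduleCat_exact_iff]
  intro t ht
  obtain ⟨U, hxU, s, rfl⟩ := exists_germ_eq S.X₂.obj t
  have hs : germ S.X₃.obj U x hxU (app S.g U s) = germ S.X₃.obj U x hxU 0 :=
    (stalkFunctor_map_germ_apply U x hxU S.g.hom s).symm.trans (ht.trans (map_zero _).symm)
  obtain ⟨V, hxV, i, j, hij⟩ := germ_eq S.X₃.obj x hxU hxU _ _ hs
  obtain ⟨r, hr⟩ := h V (S.X₂.res i.le s) (by
    rw [app_res]; exact hij.trans (map_zero _))
  refine ⟨germ S.X₁.obj V x hxV r, ?_⟩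
  refine (stalkFunctor_map_germ_apply V x hxV S.f.hom r).trans ?_
  refine (congrArg (germ S.X₂.obj V x hxV) hr).trans ?_
  exact germ_res_apply _ _ _ _ _

lemma sections_exact {S : ShortComplex (ModSheaf k X)} (hS : S.ShortExact) (U : Opens X)
    {s : S.X₂.sections U} (hs : app S.g U s = 0) : ∃ r, app S.f U r = s := by
  have := hS.mono_f
  have h := hS.exact.map_of_mono_of_preservesKernel
    (sheafToPresheaf _ _ ⋙ (evaluation _ _).obj (op U)) inferInstance inferInstance
  exact (ShortComplex.moduleCat_exact_iff _).1 h s hs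

/-! ### Constant sheaves on locally closed sets, extended by zero -/

/-- `Z'` is a relatively open subset of `Z`. -/
def IsOpenIn {X : Type*} [TopologicalSpace X] (Z' Z : Set X) : Prop :=
  ∃ O, IsOpen O ∧ Z ∩ O = Z'

lemma isOpenIn_of_le {X : Type*} [TopologicalSpace X] {V U : Opens X} (h : V ≤ U) :
    IsOpenIn (V : Set X) U :=
  ⟨V, V.isOpen, Set.inter_eq_right.2 h⟩

/-- Being locally near each point a multiple of the indicator function of `Z`. The multiple near
`x` is then `f x`. -/
def indicatorMultiple (k : Type u) [CommRing k] (Z : Set X) :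
    TopCat.LocalPredicate (fun _ : X => k) where
  pred {U} f := ∀ x : U, ∀ᶠ y in 𝓝 (x : X), ∀ hy : y ∈ U, f ⟨y, hy⟩ = f x * Z.indicator 1 y
  res i _ hf x := (hf (i x)).mono fun _ h hy => h (i.le hy)
  locality f hf x := by
    obtain ⟨V, hxV, i, hV⟩ := hf x
    filter_upwards [hV ⟨x, hxV⟩, V.isOpen.mem_nhds hxV] with y h hyV _ using h hyV

/-- The functions on `U` that are locally multiples of the indicator function of `Z`. -/
def indicatorMultiples (k : Type u) [CommRing k] (Z : Set X) (U : Opens X) :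
    Submodule k (U → k) where
  carrier := {f | (indicatorMultiple k Z).pred f}
  add_mem' hf hg x := by
    filter_upwards [hf x, hg x] with y hfy hgy hy
    simp only [Pi.add_apply, hfy hy, hgy hy, add_mul]
  zero_mem' x := by simp
  smul_mem' c f hf x := by
    filter_upwards [hf x] with y hfy hy
    simp only [Pi.smul_apply, smul_eq_mul, hfy hy, mul_assoc]

/-- The presheaf of local multiples of the indicator function of `Z`. -/
def indicatorMultiplesPresheaf (k : Type u) [CommRing k] (Z : Set X) :
    TopCat.Presheaf (ModuleCat.{u} k) X where
  obj U := ModuleCat.of k (indicatorMultiples k Z U.unop)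
  map i := ModuleCat.ofHom
    { toFun f := ⟨fun x => f.1 (i.unop x), (indicatorMultiple k Z).res i.unop f.1 f.2⟩
      map_add' _ _ := rfl
      map_smul' _ _ := rfl }

/-- The constant sheaf on `Z`, extended by zero to `X`, for a locally closed subset `Z`. -/
def constExt (k : Type u) [CommRing k] (Z : Set X) : ModSheaf k X :=
  ⟨indicatorMultiplesPresheaf k Z,
    (TopCat.Presheaf.isSheaf_iff_isSheaf_comp (forget (ModuleCat.{u} k)) _).2
      (TopCat.subpresheafToTypes.isSheaf (indicatorMultiple k Z))⟩

namespace constExt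

lemma section_eq_zero_or_mem {Z : Set X} {U : Opens X} (f : (constExt k Z).sections U) (x : U) :
    f.1 x = 0 ∨ (x : X) ∈ Z := by
  refine or_iff_not_imp_right.2 fun hx => ?_
  have := (f.2 x).self_of_nhds x.2
  rwa [Set.indicator_of_notMem hx, mul_zero] at this

lemma exists_eq_mul_indicator {Z : Set X} {U : Opens X} (f : (constExt k Z).sections U) (x : U) :
    ∃ (V : Opens X) (hV : V ≤ U), (x : X) ∈ V ∧
      ∀ y : V, f.1 ⟨y, hV y.2⟩ = f.1 x * Z.indicator 1 (y : X) := by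
  obtain ⟨W, hW, hWo, hxW⟩ := eventually_nhds_iff.1 (f.2 x)
  exact ⟨⟨W, hWo⟩ ⊓ U, inf_le_right, ⟨hxW, x.2⟩, fun y => hW y y.2.1 y.2.2⟩

/-- The indicator function of `Z` as a section of the constant sheaf on `Z` extended by zero, over
an open set in which `Z` is closed. -/
def indicator (k : Type u) [CommRing k] {Z C : Set X} (hC : IsClosed C) {U : Opens X}
    (h : ∀ x ∈ U, x ∈ Z ↔ x ∈ C) : (constExt k Z).sections U :=
  ⟨fun x => Z.indicator 1 (x : X), fun x => by
    by_cases hx : (x : X) ∈ Z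
    · exact .of_forall fun y _ => by simp [hx]
    · filter_upwards [hC.isOpen_compl.mem_nhds (mt (h x x.2).2 hx)] with y hyC hyU
      simp [hx, mt (h y hyU).1 hyC]⟩

section IsOpenIn

variable {Z' Z : Set X}

lemma mem_indicatorMultiples_iff (h : IsOpenIn Z' Z) {U : Opens X} {f : U → k}
    (hf : ∀ x, f x = 0 ∨ (x : X) ∈ Z') :
    f ∈ indicatorMultiples k Z' U ↔ f ∈ indicatorMultiples k Z U := by
  refine forall_congr' fun x => Filter.eventually_congr ?_
  obtain ⟨O, hO, rfl⟩ := h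
  rcases hf x with hx | hx
  · exact .of_forall fun y => by simp [hx]
  · filter_upwards [hO.mem_nhds hx.2] with y hy
    simp only [Set.indicator, Set.mem_inter_iff, hy, and_true]

lemma indicatorMultiples_mono (h : IsOpenIn Z' Z) (U : Opens X) :
    indicatorMultiples k Z' U ≤ indicatorMultiples k Z U := fun f hf =>
  (mem_indicatorMultiples_iff h (section_eq_zero_or_mem ⟨f, hf⟩)).1 hf

lemma mul_indicator_compl_mem (h : IsOpenIn Z' Z) {U : Opens X} {f : U → k}
    (hf : f ∈ indicatorMultiples k Z U) :
    (fun x : U => f x * Z'ᶜ.indicator 1 (x : X)) ∈ indicatorMultiples k (Z \ Z') U := by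
  intro x
  obtain ⟨O, hO, rfl⟩ := h
  by_cases hx : (x : X) ∈ Z ∩ O
  · filter_upwards [hf x, hO.mem_nhds hx.2] with y hfy hyO hy
    by_cases hyZ : y ∈ Z <;> simp [hfy hy, hx.1, hx.2, hyZ, hyO]
  · filter_upwards [hf x] with y hfy hy
    have h1 : (Z ∩ O)ᶜ.indicator 1 (x : X) = (1 : k) := Set.indicator_of_mem hx 1
    rw [hfy hy, h1, mul_one, mul_assoc, Set.sdiff_eq, Set.inter_indicator_one, Pi.mul_apply]

/-- The inclusion `k_{Z'} ⟶ k_Z` for a relatively open subset `Z'` of `Z`. -/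
def incl (k : Type u) [CommRing k] (h : IsOpenIn Z' Z) : constExt k Z' ⟶ constExt k Z where
  hom :=
    { app U := ModuleCat.ofHom (Submodule.inclusion (indicatorMultiples_mono h U.unop))
      naturality _ _ _ := rfl }

/-- The restriction `k_Z ⟶ k_{Z \ Z'}` for a relatively open subset `Z'` of `Z`. -/
def proj (k : Type u) [CommRing k] (h : IsOpenIn Z' Z) : constExt k Z ⟶ constExt k (Z \ Z') where
  hom :=
    { app U := ModuleCat.ofHom
        { toFun f := ⟨fun x => f.1 x * Z'ᶜ.indicator 1 (x : X), mul_indicator_compl_mem h f.2⟩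
          map_add' _ _ := by ext x; exact add_mul _ _ _
          map_smul' _ _ := by ext x; exact mul_assoc _ _ _ }
      naturality _ _ _ := rfl }

/-- The sequence `k_{Z'} ⟶ k_Z ⟶ k_{Z \ Z'}` for a relatively open subset `Z'` of `Z`. -/
@[simps]
def shortComplex (k : Type u) [CommRing k] (h : IsOpenIn Z' Z) : ShortComplex (ModSheaf k X) where
  f := incl k h
  g := proj k h
  zero := hom_ext fun U (f : indicatorMultiples k Z' U) => Subtype.ext <| funext fun x => by
    change f.1 x * Z'ᶜ.indicator 1 (x : X) = 0
    rcases section_eq_zero_or_mem f x with hx | hx <;> simp [hx]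

lemma epi_proj (h : IsOpenIn Z' Z) (hZ : IsLocallyClosed Z) : Epi (proj k h) := by
  refine (epi_iff_locally_surjective _).2 fun U t x hx => ?_
  obtain ⟨V, hV, hxV, ht⟩ := exists_eq_mul_indicator t ⟨x, hx⟩
  set c := t.1 ⟨x, hx⟩
  rcases section_eq_zero_or_mem t ⟨x, hx⟩ with h0 | hxZ
  · refine ⟨V, hV, hxV, 0, (map_zero _).trans (Subtype.ext (funext fun y => ?_))⟩
    exact ((ht y).trans (mul_eq_zero_of_left h0 _)).symm
  · obtain ⟨W, C, hW, hC, rfl⟩ := hZ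
    let W' : Opens X := V ⊓ ⟨W, hW⟩
    refine ⟨W', inf_le_left.trans hV, ⟨hxV, hxZ.1.1⟩, c • indicator k (U := W') hC fun y hy =>
        and_iff_right hy.2, Subtype.ext (funext fun y => ?_)⟩
    have hy : ((W ∩ C) \ Z').indicator (1 : X → k) y =
        (W ∩ C).indicator 1 (y : X) * Z'ᶜ.indicator 1 (y : X) :=
      congrFun (Set.inter_indicator_one (s := W ∩ C) (t := Z'ᶜ)) y
    exact ((ht ⟨y, y.2.1⟩).trans ((congrArg (c * ·) hy).trans (mul_assoc _ _ _).symm)).symm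

lemma shortExact (h : IsOpenIn Z' Z) (hZ : IsLocallyClosed Z) :
    (shortComplex k h).ShortExact where
  exact := exact_of_sections fun U (f : indicatorMultiples k Z U) hf =>
    ⟨⟨f.1, (mem_indicatorMultiples_iff h fun x => by
      have hx : f.1 x * Z'ᶜ.indicator 1 (x : X) = 0 := congrFun (congrArg Subtype.val hf) x
      by_contra! hxZ'
      exact hxZ'.1 (by simpa [hxZ'.2] using hx)).2 f.2⟩, rfl⟩
  mono_f := mono_of_injective _ fun U => Submodule.inclusion_injective (indicatorMultiples_mono h U)
  epi_g := epi_proj h hZ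

end IsOpenIn

end constExt

lemma W_of_bijective {P Q : (Opens X)ᵒᵖ ⥤ ModuleCat.{u} k} (η : P ⟶ Q)
    (hinj : ∀ (V : Opens X), ∀ x ∈ V, ∀ s, (η.app (op V)).hom s = 0 → s = 0)
    (hsurj : ∀ (V : Opens X) (t : Q.obj (op V)), ∀ x ∈ V, ∃ (W : Opens X) (hW : W ≤ V),
      x ∈ W ∧ ∃ s, (η.app (op W)).hom s = Q.map (homOfLE hW).op t) :
    (Opens.grothendieckTopology X).W η := by
  have : Presheaf.IsLocallyInjective (Opens.grothendieckTopology X) η := by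
    refine ⟨fun {V} s t hst x hx => ⟨V.unop, 𝟙 _, ?_, hx⟩⟩
    have hst' : s - t = 0 := hinj V.unop x hx (s - t) <|
      (map_sub (η.app V).hom s t).trans (sub_eq_zero.2 hst)
    simp [sub_eq_zero.1 hst']
  have : Presheaf.IsLocallySurjective (Opens.grothendieckTopology X) η := by
    refine ⟨fun {V} t x hx => ?_⟩
    obtain ⟨W, hW, hxW, s, hs⟩ := hsurj V t x hx
    exact ⟨W, homOfLE hW, ⟨s, hs⟩, hxW⟩
  exact GrothendieckTopology.W_of_isLocallyBijective (J := Opens.grothendieckTopology X) η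

/-- Morphisms from the free presheaf of modules on a representable presheaf are sections. -/
def freeYonedaEquiv (U : Opens X) (P : (Opens X)ᵒᵖ ⥤ ModuleCat.{u} k) :
    (yoneda.obj U ⋙ ModuleCat.free k ⟶ P) ≃ P.obj (op U) where
  toFun φ := (φ.app (op U)).hom (ModuleCat.freeMk (𝟙 U))
  invFun t :=
    { app V := ModuleCat.freeDesc (↾ fun i : V.unop ⟶ U => P.map i.op t)
      naturality _ _ _ := ModuleCat.free_hom_ext fun i => by
        simp [ModuleCat.freeDesc_apply, ModuleCat.free_map_apply] }
  left_inv φ := by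
    ext V : 2
    refine ModuleCat.free_hom_ext fun i => ?_
    have := ConcreteCategory.congr_hom (φ.naturality i.op) (ModuleCat.freeMk (R := k) (𝟙 U))
    simpa [ModuleCat.free_map_apply] using this.symm
  right_inv t := by simp

lemma freeYonedaEquiv_symm_app {U : Opens X} {P : (Opens X)ᵒᵖ ⥤ ModuleCat.{u} k}
    (t : P.obj (op U)) {V : Opens X} (i : V ⟶ U) (c : k) :
    (((freeYonedaEquiv U P).symm t).app (op V)).hom (c • ModuleCat.freeMk (R := k) i) =
      c • P.map i.op t :=
  (map_smul (((freeYonedaEquiv U P).symm t).app (op V)).hom c _).trans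
    (congrArg (c • ·) (ModuleCat.freeDesc_apply (↾ fun j : V ⟶ U => P.map j.op t) i))

lemma freeYoneda_eq_smul {U V : Opens X} (s : (yoneda.obj U ⋙ ModuleCat.free k).obj (op V))
    (i : V ⟶ U) : ∃ c : k, s = c • ModuleCat.freeMk (R := k) i :=
  ⟨(show (V ⟶ U) →₀ k from s) i, by
    refine Finsupp.ext (f := (show (V ⟶ U) →₀ k from s)) fun j => ?_
    obtain rfl := Subsingleton.elim i j
    exact ((Finsupp.smul_apply _ (Finsupp.single i (1 : k)) i).trans (by simp)).symm⟩

lemma freeYoneda_eq_zero {U V : Opens X} (s : (yoneda.obj U ⋙ ModuleCat.free k).obj (op V))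
    (h : ¬ V ≤ U) : s = 0 :=
  Finsupp.ext (f := (show (V ⟶ U) →₀ k from s)) fun j => absurd j.le h

namespace constExt

/-- The section `1` over `U` of the constant sheaf on `U` extended by zero. -/
def one (k : Type u) [CommRing k] (U : Opens X) : (constExt k (U : Set X)).sections U :=
  indicator k isClosed_univ fun _ hx => ⟨fun _ => trivial, fun _ => hx⟩

lemma W_freeYonedaEquiv_symm_one (U : Opens X) : (Opens.grothendieckTopology X).W
    ((freeYonedaEquiv U (constExt k (U : Set X)).obj).symm (one k U)) := by
  refine W_of_bijective _ (fun V x hx s hs => ?_) fun V t x hx => ?_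
  · by_cases hVU : V ≤ U
    · obtain ⟨c, rfl⟩ := freeYoneda_eq_smul s (homOfLE hVU)
      have hc : c * (U : Set X).indicator 1 x = 0 := congrFun (congrArg Subtype.val
        ((freeYonedaEquiv_symm_app (one k U) (homOfLE hVU) c).symm.trans hs)) ⟨x, hx⟩
      rw [Set.indicator_of_mem (hVU hx), Pi.one_apply, mul_one] at hc
      rw [hc, zero_smul]
    · exact freeYoneda_eq_zero s hVU
  · obtain ⟨W, hW, hxW, ht⟩ := exists_eq_mul_indicator t ⟨x, hx⟩
    rcases section_eq_zero_or_mem t ⟨x, hx⟩ with h0 | hxU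
    · refine ⟨W, hW, hxW, 0, (map_zero _).trans (Subtype.ext (funext fun y => ?_))⟩
      exact ((ht y).trans (mul_eq_zero_of_left h0 _)).symm
    · refine ⟨W ⊓ U, inf_le_left.trans hW, ⟨hxW, hxU⟩, t.1 ⟨x, hx⟩ •
        ModuleCat.freeMk (R := k) (homOfLE inf_le_right : W ⊓ U ⟶ U), ?_⟩
      refine (freeYonedaEquiv_symm_app _ _ _).trans (Subtype.ext (funext fun y => ?_))
      exact (ht ⟨y, y.2.1⟩).symm

/-- Morphisms `k_U ⟶ F` are sections of `F` over `U`. -/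
def homEquiv (U : Opens X) (F : ModSheaf k X) : (constExt k (U : Set X) ⟶ F) ≃+ F.sections U :=
  .ofBijective (AddMonoidHom.mk' (fun a => app a U (one k U)) fun _ _ => rfl) <| by
    have h := (freeYonedaEquiv U F.obj).bijective.comp
      ((W_freeYonedaEquiv_symm_one U F.obj F.property).comp
        (fullyFaithfulSheafToPresheaf _ _).homEquiv.bijective)
    convert! h using 1
    funext a
    exact congrArg (app a U) ((freeYonedaEquiv U _).apply_symm_apply (one k U)).symm

lemma homEquiv_incl_comp {U V : Opens X} (h : V ≤ U) (F : ModSheaf k X)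
    (a : constExt k (U : Set X) ⟶ F) :
    homEquiv V F (incl k (isOpenIn_of_le h) ≫ a) = F.res h (homEquiv U F a) := by
  refine Eq.trans ?_ (app_res a h _)
  refine congrArg (app a V) (Subtype.ext (funext fun x => ?_))
  exact (Set.indicator_of_mem x.2 _).trans (Set.indicator_of_mem (h x.2) _).symm

end constExt

lemma res_surjective_of_injective (F : ModSheaf k X) [Injective F] {U V : Opens X} (h : V ≤ U) :
    Function.Surjective (F.res h) := by
  intro s
  have : Mono (constExt.incl k (isOpenIn_of_le h)) :=
    (constExt.shortExact (isOpenIn_of_le h) U.isOpen.isLocallyClosed).mono_f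
  obtain ⟨a, rfl⟩ := (constExt.homEquiv V F).surjective s
  refine ⟨constExt.homEquiv U F
    (Injective.factorThru a (constExt.incl k (isOpenIn_of_le h))), ?_⟩
  exact (constExt.homEquiv_incl_comp h F _).symm.trans
    (congrArg _ (Injective.comp_factorThru a _))

/-! ### Stalks and skyscraper sheaves -/

/-- The stalk functor at a point, on sheaves. -/
abbrev stalk (p : X) : ModSheaf k X ⥤ ModuleCat.{u} k :=
  TopCat.Sheaf.forget _ X ⋙ TopCat.Presheaf.stalkFunctor _ p

/-- The functor sending a module to the skyscraper sheaf at a point. -/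
abbrev skyscraper (p : X) : ModuleCat.{u} k ⥤ ModSheaf k X :=
  skyscraperSheafFunctor p

/-- The adjunction between stalks and skyscrapers at `p`. -/
abbrev stalkAdj (k : Type u) [CommRing k] (p : X) :
    (stalk p : ModSheaf k X ⥤ ModuleCat.{u} k) ⊣ skyscraper p :=
  stalkSkyscraperSheafAdjunction p

instance isIso_stalkAdj_counit (p : X) : IsIso (stalkAdj k p).counit := by
  have (M : ModuleCat.{u} k) : IsIso ((stalkAdj k p).counit.app M) :=
    inferInstanceAs (IsIso (skyscraperPresheafStalkOfSpecializes p M specializes_rfl).hom)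
  exact NatIso.isIso_of_isIso_app _

instance isIso_stalk_map_stalkAdj_unit (p : X) (F : ModSheaf k X) :
    IsIso ((stalk p).map ((stalkAdj k p).unit.app F)) :=
  IsIso.of_isIso_fac_right ((stalkAdj k p).left_triangle_components F)

instance preservesFiniteLimits_stalk (p : X) :
    PreservesFiniteLimits (stalk p : ModSheaf k X ⥤ ModuleCat.{u} k) :=
  inferInstanceAs <| PreservesFiniteLimits <|
    TopCat.Sheaf.forget (ModuleCat.{u} k) X ⋙ TopCat.Presheaf.stalkFunctor _ p

/-- Morphisms between skyscraper sheaves at the same point. -/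
def skyscraperHomEquiv (p : X) (N : ModuleCat.{u} k) :
    ((skyscraper p).obj (.of k k) ⟶ (skyscraper p : _ ⥤ ModSheaf k X).obj N) ≃+ N :=
  have : (stalk p : ModSheaf k X ⥤ ModuleCat.{u} k).Additive :=
    Functor.additive_of_preserves_binary_products _
  have := (stalkAdj k p).right_adjoint_additive
  ((AddEquiv.mk' (stalkAdj k p).fullyFaithfulROfIsIsoCounit.homEquiv fun _ _ =>
    Functor.map_add (skyscraper p)).symm.trans
      (ModuleCat.homAddEquiv (M := .of k k) (N := N))).trans
    (LinearMap.ringLmapEquivSelf k k N).toAddEquiv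

lemma subsingleton_stalk_skyscraper [T1Space X] {p q : X} (h : q ≠ p) (M : ModuleCat.{u} k) :
    Subsingleton ((stalk q).obj ((skyscraper p).obj M)) :=
  ModuleCat.subsingleton_of_isZero <| (isZero_zero _).of_iso <|
    (skyscraperPresheafStalkOfNotSpecializesIsTerminal p M
      fun hpq => h hpq.eq.symm).uniqueUpToIso HasZeroObject.zeroIsTerminal

instance epi_stalkAdj_unit [T1Space X] (p : X) (F : ModSheaf k X) :
    Epi ((stalkAdj k p).unit.app F) := by
  refine (TopCat.Sheaf.isLocallySurjective_iff_epi _).1 <|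
    (TopCat.Presheaf.locally_surjective_iff_surjective_on_stalks _).2 fun q => ?_
  by_cases h : q = p
  · subst h
    exact ((ConcreteCategory.isIso_iff_bijective _).1 (isIso_stalk_map_stalkAdj_unit q F)).2
  · have := subsingleton_stalk_skyscraper h ((stalk p).obj F)
    exact fun t => ⟨0, this.elim _ _⟩

lemma isIso_stalkAdj_unit [T1Space X] (p : X) (F : ModSheaf k X)
    (hF : ∀ q ≠ p, Subsingleton ((stalk q).obj F)) : IsIso ((stalkAdj k p).unit.app F) := by
  refine (TopCat.Presheaf.isIso_iff_stalkFunctor_map_iso _).2 fun q => ?_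
  by_cases h : q = p
  · subst h
    exact isIso_stalk_map_stalkAdj_unit q F
  · exact isIso_of_source_target_iso_zero _
      (@ModuleCat.isZero_of_subsingleton _ _ _ (hF q h)).isoZero
      (@ModuleCat.isZero_of_subsingleton _ _ _
        (subsingleton_stalk_skyscraper h ((stalk p).obj F))).isoZero

lemma injective_skyscraper {k : Type u} [Field k] (p : X) (M : ModuleCat.{u} k) :
    Injective ((skyscraper p : _ ⥤ ModSheaf k X).obj M) := by
  have : Injective M := (Module.injective_iff_injective_object k M).1
    (Module.injective_of_isSemisimpleRing k M)
  exact Injective.injective_of_adjoint (stalkAdj k p) M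

namespace constExt

lemma subsingleton_stalk {Z : Set X} (hZ : IsClosed Z) {q : X} (hq : q ∉ Z) :
    Subsingleton ((stalk q).obj (constExt k Z)) := by
  refine subsingleton_of_forall_eq 0 fun t => ?_
  obtain ⟨U, hqU, s, rfl⟩ := TopCat.Presheaf.exists_germ_eq _ t
  have hs : (constExt k Z).res (inf_le_left : U ⊓ ⟨Zᶜ, hZ.isOpen_compl⟩ ≤ U) s = 0 :=
    Subtype.ext <| funext fun x =>
      (section_eq_zero_or_mem s ⟨x, x.2.1⟩).resolve_right x.2.2
  refine (TopCat.Presheaf.germ_res_apply _ (homOfLE inf_le_left :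
    U ⊓ ⟨Zᶜ, hZ.isOpen_compl⟩ ⟶ U) q ⟨hqU, hq⟩ s).symm.trans ?_
  exact (congrArg _ hs).trans (map_zero _)

/-- The germ at `p ∈ Z` of the section `c` of the constant sheaf on a closed set `Z`. -/
def constGerm (k : Type u) [CommRing k] {Z : Set X} (hZ : IsClosed Z) (p : X) :
    k →ₗ[k] (stalk p).obj (constExt k Z) :=
  .toSpanSingleton k _ (TopCat.Presheaf.germ (constExt k Z).obj ⊤ p trivial
    (indicator k hZ fun _ _ => Iff.rfl))

open TopCat.Presheaf in
lemma constGerm_bijective {Z : Set X} (hZ : IsClosed Z) {p : X} (hp : p ∈ Z) :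
    Function.Bijective (constGerm k hZ p) := by
  have eq_germ (c : k) : constGerm k hZ p c =
      germ (constExt k Z).obj ⊤ p trivial (c • indicator k hZ fun _ _ => Iff.rfl) :=
    (map_smul (germ (constExt k Z).obj ⊤ p trivial).hom _ _).symm
  constructor
  · refine (injective_iff_map_eq_zero _).2 fun c hc => ?_
    rw [eq_germ] at hc
    obtain ⟨V, hpV, i, j, h⟩ := germ_eq _ (U := ⊤) (V := ⊤) p trivial trivial _ _
      (hc.trans (map_zero _).symm)
    have : c * Z.indicator 1 p = 0 :=
      congrFun (congrArg Subtype.val (h.trans (map_zero _))) ⟨p, hpV⟩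
    rwa [Set.indicator_of_mem hp, Pi.one_apply, mul_one] at this
  · intro t
    obtain ⟨U, hpU, s, rfl⟩ := exists_germ_eq _ t
    obtain ⟨V, hV, hpV, hs⟩ := exists_eq_mul_indicator s ⟨p, hpU⟩
    exact ⟨s.1 ⟨p, hpU⟩, (eq_germ _).trans <| germ_ext _ V hpV (homOfLE le_top) (homOfLE hV) <|
      Subtype.ext <| funext fun y => (hs y).symm⟩

/-- The stalk at `p ∈ Z` of the constant sheaf on a closed set `Z`. -/
def stalkIso (k : Type u) [CommRing k] {Z : Set X} (hZ : IsClosed Z) {p : X} (hp : p ∈ Z) :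
    (stalk p).obj (constExt k Z) ≅ ModuleCat.of k k :=
  (LinearEquiv.ofBijective _ (constGerm_bijective hZ hp)).symm.toModuleIso

/-- The constant sheaf on a point is the skyscraper sheaf. -/
def skyscraperIso [T1Space X] (k : Type u) [CommRing k] (p : X) :
    constExt k {p} ≅ (skyscraper p).obj (ModuleCat.of k k) :=
  have := isIso_stalkAdj_unit p (constExt k {p}) fun _ hq =>
    subsingleton_stalk isClosed_singleton hq
  asIso ((stalkAdj k p).unit.app (constExt k {p})) ≪≫
    (skyscraper p).mapIso (stalkIso k isClosed_singleton rfl)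

/-- The constants, as sections of the constant sheaf `k_X`. -/
def ofConst (k : Type u) [CommRing k] (X : TopCat.{u}) :
    (Functor.const (Opens X)ᵒᵖ).obj (ModuleCat.of k k) ⟶
      (constExt k (Set.univ : Set X)).obj where
  app U := ModuleCat.ofHom (.toSpanSingleton k _ (indicator k isClosed_univ fun _ _ => Iff.rfl))

lemma ofConst_app_apply {U : Opens X} (c : k) (x : U) :
    (show (constExt k Set.univ).sections U from ((ofConst k X).app (op U)).hom c).1 x = c :=
  (congrArg (c * ·) (Set.indicator_of_mem (Set.mem_univ _) _)).trans (mul_one c)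

lemma exists_eq_const {U : Opens X} (f : (constExt k Set.univ).sections U) (x : U) :
    ∃ (V : Opens X) (hV : V ≤ U), (x : X) ∈ V ∧ ∀ y : V, f.1 ⟨y, hV y.2⟩ = f.1 x := by
  simpa only [Set.indicator_univ, Pi.one_apply, mul_one] using exists_eq_mul_indicator f x

lemma W_ofConst : (Opens.grothendieckTopology X).W (ofConst k X) := by
  refine W_of_bijective _ (fun V x hx (c : k) hc => ?_) fun V t x hx => ?_
  · exact (ofConst_app_apply c ⟨x, hx⟩).symm.trans (congrFun (congrArg Subtype.val hc) ⟨x, hx⟩)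
  · obtain ⟨W, hW, hxW, ht⟩ := exists_eq_const t ⟨x, hx⟩
    refine ⟨W, hW, hxW, t.1 ⟨x, hx⟩, Subtype.ext (funext fun y => ?_)⟩
    exact (ofConst_app_apply _ y).trans (ht y).symm

/-- The constant sheaf of Mathlib is `k_X`. -/
def constantSheafIso (k : Type u) [CommRing k] (X : TopCat.{u}) :
    (constantSheaf (Opens.grothendieckTopology X) (ModuleCat.{u} k)).obj (ModuleCat.of k k) ≅
      constExt k Set.univ :=
  @asIso _ _ _ _ _ (((Opens.grothendieckTopology X).W_iff (ofConst k X)).1 W_ofConst) ≪≫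
    (sheafificationIso (constExt k Set.univ)).symm

lemma section_eq_of_isPreconnected {U : Opens X} (hU : IsPreconnected (U : Set X))
    (f : (constExt k Set.univ).sections U) (x y : U) : f.1 x = f.1 y := by
  have := Subtype.preconnectedSpace hU
  refine IsLocallyConstant.apply_eq_of_preconnectedSpace
    ((IsLocallyConstant.iff_exists_open _).2 fun z => ?_) x y
  obtain ⟨V, hV, hzV, h⟩ := exists_eq_const f z
  exact ⟨_, V.isOpen.preimage continuous_subtype_val, hzV, fun w hw => h ⟨w, hw⟩⟩

lemma eval_bijective {U : Opens X} (hU : IsPreconnected (U : Set X)) (x : U) :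
    Function.Bijective fun f : (constExt k Set.univ).sections U => f.1 x :=
  ⟨fun f g hfg => Subtype.ext <| funext fun y =>
    (section_eq_of_isPreconnected hU f y x).trans
      (hfg.trans (section_eq_of_isPreconnected hU g x y)),
    fun c => ⟨((ofConst k X).app (op U)).hom c, ofConst_app_apply c x⟩⟩

lemma res_bijective_of_isPreconnected {U V : Opens X} (h : V ≤ U)
    (hU : IsPreconnected (U : Set X)) (hV : IsPreconnected (V : Set X))
    (hne : (V : Set X).Nonempty) :
    Function.Bijective ((constExt k Set.univ).res h) := by
  obtain ⟨x, hx⟩ := hne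
  exact ((eval_bijective hV ⟨x, hx⟩).of_comp_iff' _).1 (eval_bijective hU ⟨x, h hx⟩)

/-- Sections of the constant sheaf `k_X` over a connected open set. -/
def sectionsEquiv {U : Opens X} (hU : IsPreconnected (U : Set X)) (x : U) :
    (constExt k Set.univ).sections U ≃+ k :=
  .ofBijective (AddMonoidHom.mk' (fun f => f.1 x) fun _ _ => rfl) (eval_bijective hU x)

end constExt

/-- The stalk of the constant sheaf. -/
def stalkConstantSheafEquiv (k : Type u) [CommRing k] (p : X) :
    (stalk p).obj ((constantSheaf _ (ModuleCat.{u} k)).obj (ModuleCat.of k k)) ≃+ k :=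
  ((stalk p).mapIso (constExt.constantSheafIso k X) ≪≫
    constExt.stalkIso k isClosed_univ trivial).toLinearEquiv.toAddEquiv

/-- The unit `F ⟶ i_* i^* F` of the adjunction between stalks and skyscrapers. -/
def unit (p : X) (F : ModSheaf k X) : F ⟶ (skyscraper p).obj ((stalk p).obj F) :=
  (stalkAdj k p).unit.app F

/-- The sequence formed by the unit `F ⟶ i_* i^* F` and its kernel. -/
@[simps]
def unitShortComplex (p : X) (F : ModSheaf k X) : ShortComplex (ModSheaf k X) where
  f := kernel.ι (unit p F)
  g := unit p F
  zero := kernel.condition _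

lemma unitShortComplex_shortExact [T1Space X] (p : X) (F : ModSheaf k X) :
    (unitShortComplex p F).ShortExact where
  exact := ShortComplex.exact_kernel _
  mono_f := inferInstanceAs (Mono (kernel.ι (unit p F)))
  epi_g := epi_stalkAdj_unit p F

/-! ### Lifting sections over boxes -/

section Lifts

variable {S : ShortComplex (ModSheaf k X)}
  {B V V' : Opens X} {s : S.X₃.sections B}

/-- A section `s` of the third term of a short complex lifts over `V` if its restriction to `V`
comes from the middle term. -/
def Lifts (S : ShortComplex (ModSheaf k X)) {B : Opens X} (s : S.X₃.sections B)
    (V : Opens X) : Prop :=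
  ∃ (hV : V ≤ B) (t : S.X₂.sections V), app S.g V t = S.X₃.res hV s

lemma Lifts.mono (h : V' ≤ V) : Lifts S s V → Lifts S s V' := by
  rintro ⟨hV, t, ht⟩
  exact ⟨h.trans hV, S.X₂.res h t, by rw [app_res, ht, res_res]⟩

lemma Lifts.of_isEmpty (hV : V ≤ B) (h : ∀ x, x ∉ V) : Lifts S s V :=
  ⟨hV, 0, S.X₃.section_ext_of_locally fun x hx => absurd hx (h x)⟩

lemma Lifts.exists_res_eq (hS : S.ShortExact) {W : Opens X}
    (hW : Function.Surjective (S.X₁.res (le_top : W ≤ ⊤))) (hWV : W ≤ V) (hWV' : W ≤ V')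
    {hV : V ≤ B} {t : S.X₂.sections V} (ht : app S.g V t = S.X₃.res hV s) (h : Lifts S s V') :
    ∃ (hV' : V' ≤ B) (t' : S.X₂.sections V'), app S.g V' t' = S.X₃.res hV' s ∧
      S.X₂.res hWV' t' = S.X₂.res hWV t := by
  obtain ⟨hV', t₀, ht₀⟩ := h
  obtain ⟨d, hd⟩ : ∃ d, app S.f W d = S.X₂.res hWV t - S.X₂.res hWV' t₀ :=
    sections_exact hS W (by rw [map_sub, app_res, app_res, ht, ht₀, res_res, res_res, sub_self])
  obtain ⟨e, rfl⟩ := hW d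
  refine ⟨hV', t₀ + app S.f V' (S.X₁.res le_top e), ?_, ?_⟩
  · rw [map_add, ht₀, ← app_comp, S.zero]
    exact add_zero _
  · rw [map_add, ← app_res, res_res, hd, add_sub_cancel]

lemma Lifts.sup (hS : S.ShortExact)
    (hW : Function.Surjective (S.X₁.res (le_top : V ⊓ V' ≤ ⊤)))
    (h : Lifts S s V) (h' : Lifts S s V') : Lifts S s (V ⊔ V') := by
  obtain ⟨hV, t, ht⟩ := h
  obtain ⟨hV', t', ht', htt'⟩ := h'.exists_res_eq hS hW inf_le_left inf_le_right ht
  let U : Bool → Opens X := fun b => cond b V V'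
  have hU (b : Bool) : U b ≤ V ⊔ V' := by cases b; exacts [le_sup_right, le_sup_left]
  have cover : V ⊔ V' ≤ iSup U := sup_le (le_iSup U true) (le_iSup U false)
  obtain ⟨r, hr⟩ := S.X₂.exists_glue hU cover (Bool.rec t' t) (by
    rintro (_ | _) (_ | _)
    · rfl
    · have := congrArg (S.X₂.res (inf_comm V' V).le) htt'
      simpa only [res_res] using this
    · exact htt'.symm
    · rfl)
  refine ⟨sup_le hV hV', r, S.X₃.section_ext hU cover ?_⟩
  rintro (_ | _) <;> rw [← app_res, hr, res_res]
  exacts [ht', ht]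

theorem Lifts.of_monotone (hS : S.ShortExact) {U : ℕ → Opens X} (hU : Monotone U)
    (hF : ∀ n, Function.Surjective (S.X₁.res (le_top : U n ≤ ⊤))) (h : ∀ n, Lifts S s (U n))
    (hB : B ≤ iSup U) : Lifts S s B := by
  have le (n : ℕ) : U n ≤ B := (h n).1
  let L (n : ℕ) := {t : S.X₂.sections (U n) // app S.g (U n) t = S.X₃.res (le n) s}
  have extend (n : ℕ) (t : L n) : ∃ t' : L (n + 1), S.X₂.res (hU n.le_succ) t'.1 = t.1 := by
    obtain ⟨_, t', ht', htt'⟩ :=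
      (h (n + 1)).exists_res_eq hS (hF n) le_rfl (hU n.le_succ) t.2
    exact ⟨⟨t', ht'⟩, htt'.trans (res_refl _ _)⟩
  choose next hnext using extend
  obtain ⟨_, t₀, ht₀⟩ := h 0
  let t (n : ℕ) : L n := Nat.rec ⟨t₀, ht₀⟩ next n
  have compatible {m n : ℕ} (hmn : m ≤ n) : S.X₂.res (hU hmn) (t n).1 = (t m).1 := by
    induction n, hmn using Nat.le_induction with
    | base => exact res_refl _ _
    | succ n hmn ih => rw [← ih, ← hnext n (t n), res_res]
  obtain ⟨r, hr⟩ := S.X₂.exists_glue le hB (fun n => (t n).1) fun m n => by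
    rcases le_total m n with hmn | hmn <;> rw [← compatible hmn, res_res]
  refine ⟨le_rfl, r, S.X₃.section_ext le hB fun n => ?_⟩
  rw [← app_res, hr, (t n).2, res_res]

end Lifts

section Boxes

variable {ι : Type*} [Finite ι] {ψ : (ι → ℝ) → X} (hψ : IsOpenEmbedding ψ)

/-- The open box `∏ (l i, u i)` in the chart `ψ`. -/
def box (l u : ι → ℝ) : Opens X :=
  ⟨ψ '' Set.univ.pi fun i => Set.Ioo (l i) (u i),
    hψ.isOpenMap _ (isOpen_set_pi Set.finite_univ fun _ _ => isOpen_Ioo)⟩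

variable {hψ}

lemma apply_mem_box {l u v : ι → ℝ} : ψ v ∈ box hψ l u ↔ ∀ i, l i < v i ∧ v i < u i := by
  refine hψ.injective.mem_set_image.trans ?_
  simp only [Set.mem_univ_pi, Set.mem_Ioo]

lemma box_le_iff {l u : ι → ℝ} {V : Opens X} :
    box hψ l u ≤ V ↔ ∀ v, (∀ i, l i < v i ∧ v i < u i) → ψ v ∈ V := by
  refine Set.image_subset_iff.trans (forall_congr' fun v => ?_)
  simp only [Set.mem_univ_pi, Set.mem_Ioo, Set.mem_preimage, SetLike.mem_coe]

lemma box_mono {l u l' u' : ι → ℝ} (hl : ∀ i, l i ≤ l' i) (hu : ∀ i, u' i ≤ u i) :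
    box hψ l' u' ≤ box hψ l u :=
  box_le_iff.2 fun _ hv => apply_mem_box.2 fun i =>
    ⟨(hl i).trans_lt (hv i).1, (hv i).2.trans_le (hu i)⟩

lemma box_inf_box (l u l' u' : ι → ℝ) :
    box hψ l u ⊓ box hψ l' u' = box hψ (l ⊔ l') (u ⊓ u') := by
  apply Opens.ext
  change ψ '' _ ∩ ψ '' _ = ψ '' _
  rw [← Set.image_inter hψ.injective, ← Set.pi_inter_distrib]
  simp only [Set.Ioo_inter_Ioo, Pi.sup_apply, Pi.inf_apply]

lemma notMem_box {l u : ι → ℝ} {i : ι} (hi : u i ≤ l i) (x : X) : x ∉ box hψ l u := by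
  rintro ⟨v, hv, rfl⟩
  exact (Set.Ioo_eq_empty hi.not_gt ▸ hv i trivial : v i ∈ (∅ : Set ℝ))

lemma exists_box_le {V : Opens X} {v : ι → ℝ} (hv : ψ v ∈ V) :
    ∃ l u, (∀ i, l i < v i ∧ v i < u i) ∧ box hψ l u ≤ V := by
  have := Fintype.ofFinite ι
  obtain ⟨ε, hε, h⟩ := Metric.mem_nhds_iff.1
    (hψ.continuous.continuousAt.preimage_mem_nhds (V.isOpen.mem_nhds hv))
  refine ⟨fun i => v i - ε, fun i => v i + ε, fun i => ⟨by linarith, by linarith⟩,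
    box_le_iff.2 fun w hw => h ?_⟩
  rw [Metric.mem_ball, dist_pi_lt_iff hε]
  intro i
  rw [Real.dist_eq, abs_sub_lt_iff]
  constructor <;> linarith [(hw i).1, (hw i).2]

end Boxes

section BoxLifting

variable {ι : Type*} [Finite ι] {ψ : (ι → ℝ) → X}
  (hψ : IsOpenEmbedding ψ)

/-- Softness with respect to boxes: every section over an open box extends to the whole space. -/
def ExtendsFromBoxes (F : ModSheaf k X) : Prop :=
  ∀ l u, Function.Surjective (F.res (le_top : box hψ l u ≤ ⊤))

/-- The section `s` lifts over an open box containing the closed box `∏ [l i, u i]`. -/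
def LiftsNear (S : ShortComplex (ModSheaf k X)) {B : Opens X} (s : S.X₃.sections B)
    (l u : ι → ℝ) : Prop :=
  ∃ a b, (∀ i, a i < l i) ∧ (∀ i, u i < b i) ∧ Lifts S s (box hψ a b)

variable {hψ} {S : ShortComplex (ModSheaf k X)} {B : Opens X} {s : S.X₃.sections B}
  {l u : ι → ℝ}

lemma LiftsNear.join (hS : S.ShortExact) (hF : ExtendsFromBoxes hψ S.X₁) (i : ι) {x y z : ℝ}
    (hxy : LiftsNear hψ S s (Function.update l i x) (Function.update u i y))
    (hyz : LiftsNear hψ S s (Function.update l i y) (Function.update u i z)) :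
    LiftsNear hψ S s (Function.update l i x) (Function.update u i z) := by
  obtain ⟨a, b, ha, hb, h⟩ := hxy
  obtain ⟨a', b', ha', hb', h'⟩ := hyz
  have union : Lifts S s (box hψ a b ⊔ box hψ a' b') :=
    h.sup hS (by rw [box_inf_box]; exact hF _ _) h'
  rw [Function.forall_update_iff l (fun j t => a j < t)] at ha
  rw [Function.forall_update_iff l (fun j t => a' j < t)] at ha'
  rw [Function.forall_update_iff u (fun j t => t < b j)] at hb
  rw [Function.forall_update_iff u (fun j t => t < b' j)] at hb'
  refine ⟨Function.update (a ⊔ a') i (a i), Function.update (b ⊓ b') i (b' i), ?_, ?_,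
    union.mono (box_le_iff.2 fun v hv => ?_)⟩
  · intro j
    rcases eq_or_ne j i with rfl | hj
    · simpa using ha.1
    · simpa [hj] using ⟨ha.2 j hj, ha'.2 j hj⟩
  · intro j
    rcases eq_or_ne j i with rfl | hj
    · simpa using hb'.1
    · simpa [hj] using ⟨hb.2 j hj, hb'.2 j hj⟩
  · have off {j : ι} (hj : j ≠ i) : (a j < v j ∧ a' j < v j) ∧ v j < b j ∧ v j < b' j := by
      simpa [hj] using hv j
    have at_i : a i < v i ∧ v i < b' i := by simpa using hv i
    rcases lt_or_ge (v i) (b i) with hvi | hvi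
    · refine Or.inl (apply_mem_box.2 fun j => ?_)
      rcases eq_or_ne j i with rfl | hj
      exacts [⟨at_i.1, hvi⟩, ⟨(off hj).1.1, (off hj).2.1⟩]
    · refine Or.inr (apply_mem_box.2 fun j => ?_)
      rcases eq_or_ne j i with rfl | hj
      exacts [⟨ha'.1.trans (hb.1.trans_le hvi), at_i.2⟩, ⟨(off hj).1.2, (off hj).2.2⟩]

lemma LiftsNear.of_forall_slice (hS : S.ShortExact) (hF : ExtendsFromBoxes hψ S.X₁) {i : ι}
    (hi : l i ≤ u i) (h : ∀ t ∈ Set.Icc (l i) (u i),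
      LiftsNear hψ S s (Function.update l i t) (Function.update u i t)) :
    LiftsNear hψ S s l u := by
  have key := Icc_additive_induction (P := fun x y =>
    LiftsNear hψ S s (Function.update l i x) (Function.update u i y)) hi
    (fun x y z => LiftsNear.join hS hF i) fun t ht => by
      obtain ⟨a, b, ha, hb, hab⟩ := h t ht
      rw [Function.forall_update_iff l (fun j t => a j < t)] at ha
      rw [Function.forall_update_iff u (fun j t => t < b j)] at hb
      exact ⟨Set.Ioo (a i) (b i), Ioo_mem_nhds ha.1 hb.1, fun x hx y hy => ⟨a, b,
        (Function.forall_update_iff l fun j t => a j < t).2 ⟨hx.1, ha.2⟩,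
        (Function.forall_update_iff u fun j t => t < b j).2 ⟨hy.2, hb.2⟩, hab⟩⟩
  simpa only [Function.update_eq_self] using key

lemma liftsNear_of_mem_box (hS : S.ShortExact) (hF : ExtendsFromBoxes hψ S.X₁)
    (hlu : ∀ i, l i ≤ u i) (hB : ∀ v, (∀ i, v i ∈ Set.Icc (l i) (u i)) → ψ v ∈ B) :
    LiftsNear hψ S s l u := by
  have := Fintype.ofFinite ι
  suffices H : ∀ A : Finset ι, ∀ l u : ι → ℝ, (∀ i, l i ≤ u i) →
      (∀ v, (∀ i, v i ∈ Set.Icc (l i) (u i)) → ψ v ∈ B) → (∀ i ∉ A, l i = u i) →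
      LiftsNear hψ S s l u from
    H Finset.univ l u hlu hB fun i hi => absurd (Finset.mem_univ i) hi
  intro A
  induction A using Finset.induction_on with
  | empty =>
    intro l u hlu hB h
    obtain rfl : l = u := funext fun i => h i (Finset.notMem_empty i)
    obtain ⟨V, hV, hlV, t, ht⟩ := (epi_iff_locally_surjective S.g).1 hS.epi_g B s (ψ l)
      (hB l fun i => ⟨le_rfl, le_rfl⟩)
    obtain ⟨a, b, hab, hle⟩ := exists_box_le (hψ := hψ) hlV
    exact ⟨a, b, fun i => (hab i).1, fun i => (hab i).2, Lifts.mono hle ⟨hV, t, ht⟩⟩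
  | insert i A _ ih =>
    intro l u hlu hB h
    refine LiftsNear.of_forall_slice hS hF (hlu i) fun t ht => ih _ _ ?_ ?_ ?_
    · intro j
      rcases eq_or_ne j i with rfl | hj
      · simp
      · simpa [hj] using hlu j
    · refine fun v hv => hB v fun j => ?_
      have := hv j
      rcases eq_or_ne j i with rfl | hj
      · obtain rfl : v j = t := by simpa using this
        exact ht
      · simpa [hj] using this
    · intro j hjA
      rcases eq_or_ne j i with rfl | hj
      · simp
      · simpa [hj] using h j (by simp [hj, hjA])

theorem app_box_surjective (hS : S.ShortExact) (hF : ExtendsFromBoxes hψ S.X₁) (l u : ι → ℝ) :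
    Function.Surjective (app S.g (box hψ l u)) := by
  intro s
  suffices Lifts S s (box hψ l u) by
    obtain ⟨_, t, ht⟩ := this
    exact ⟨t, ht.trans (res_refl _ _)⟩
  by_cases h : ∀ i, l i < u i
  swap
  · obtain ⟨i, hi⟩ := not_forall.1 h
    exact .of_isEmpty le_rfl (notMem_box (not_lt.1 hi))
  choose a b ha hb haI hbI hab hal hbu using fun i => exists_seq_strictAnti_strictMono_tendsto (h i)
  refine Lifts.of_monotone hS (U := fun n => box hψ (a · n) (b · n)) ?_ (fun n => hF _ _) ?_ ?_
  · exact fun m n hmn => box_mono (fun i => (ha i).antitone hmn) fun i => (hb i).monotone hmn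
  · intro n
    obtain ⟨a', b', ha', hb', h'⟩ := liftsNear_of_mem_box (s := s) (l := (a · n)) (u := (b · n))
      hS hF (fun i => (hab i n n).le) fun v hv => apply_mem_box.2 fun i =>
        ⟨(haI i n).1.trans_le (hv i).1, (hv i).2.trans_lt (hbI i n).2⟩
    exact h'.mono (box_mono (fun i => (ha' i).le) fun i => (hb' i).le)
  · refine box_le_iff.2 fun v hv => Opens.mem_iSup.2 ?_
    have eventually_mem : ∀ᶠ n in Filter.atTop, ∀ i, a i n < v i ∧ v i < b i n :=
      Filter.eventually_all.2 fun i =>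
        ((hal i).eventually_lt_const (hv i).1).and ((hbu i).eventually_const_lt (hv i).2)
    obtain ⟨n, hn⟩ := eventually_mem.exists
    exact ⟨n, apply_mem_box.2 hn⟩

lemma ExtendsFromBoxes.of_shortExact (hS : S.ShortExact) [Injective S.X₂]
    (hF : ExtendsFromBoxes hψ S.X₁) : ExtendsFromBoxes hψ S.X₃ := by
  intro l u s
  obtain ⟨t, rfl⟩ := app_box_surjective hS hF l u s
  obtain ⟨r, rfl⟩ := res_surjective_of_injective S.X₂ (le_top : box hψ l u ≤ ⊤) t
  exact ⟨app S.g ⊤ r, (app_res _ _ _).symm⟩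

end BoxLifting

section BoxExt

open Abelian

variable {ι : Type*} [Finite ι] {ψ : (ι → ℝ) → X}
  {hψ : IsOpenEmbedding ψ}

lemma isPreconnected_box (l u : ι → ℝ) : IsPreconnected (box hψ l u : Set X) :=
  (isPreconnected_univ_pi fun _ => isPreconnected_Ioo).image ψ hψ.continuous.continuousOn

lemma box_nonempty {l u : ι → ℝ} (h : ∀ i, l i < u i) : (box hψ l u : Set X).Nonempty :=
  (Set.univ_pi_nonempty_iff.2 fun i => Set.nonempty_Ioo.2 (h i)).image ψ

lemma extendsFromBoxes_constExt_univ : ExtendsFromBoxes hψ (constExt k (Set.univ : Set X)) := by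
  intro l u s
  by_cases h : (box hψ l u : Set X).Nonempty
  · obtain ⟨x, hx⟩ := h
    refine ⟨((constExt.ofConst k X).app (op ⊤)).hom (s.1 ⟨x, hx⟩), Subtype.ext (funext fun y => ?_)⟩
    exact (constExt.ofConst_app_apply _ (⟨y, trivial⟩ : (⊤ : Opens X))).trans
      (constExt.section_eq_of_isPreconnected (isPreconnected_box l u) s _ _)
  · exact ⟨0, Subtype.ext (funext fun y => absurd ⟨y.1, y.2⟩ h)⟩

variable [HasExt.{w} (ModSheaf k X)]

lemma subsingleton_ext_succ_box {F : ModSheaf k X} (hF : ExtendsFromBoxes hψ F) (l u : ι → ℝ)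
    (n : ℕ) : Subsingleton (Ext (constExt k (box hψ l u : Set X)) F (n + 1)) := by
  refine subsingleton_ext_succ_of_quotient _ (ExtendsFromBoxes hψ)
    (fun S hS _ => ExtendsFromBoxes.of_shortExact hS) (fun S hS hF φ => ?_) hF n
  obtain ⟨t, ht⟩ := app_box_surjective hS hF l u (constExt.homEquiv _ _ φ)
  obtain ⟨χ, rfl⟩ := (constExt.homEquiv (box hψ l u) S.X₂).surjective t
  exact ⟨χ, (constExt.homEquiv _ _).injective ht⟩

lemma extConcentrated_box {l u : ι → ℝ} (h : ∀ i, l i < u i) :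
    ExtConcentrated k 0 (constExt k (box hψ l u : Set X)) (constExt k (Set.univ : Set X)) := by
  obtain ⟨x, hx⟩ := box_nonempty (hψ := hψ) h
  refine ⟨⟨Ext.addEquiv₀.trans ((constExt.homEquiv _ _).trans
    (constExt.sectionsEquiv (isPreconnected_box l u) ⟨x, hx⟩))⟩, fun n hn => ?_⟩
  obtain ⟨n, rfl⟩ := Nat.exists_eq_succ_of_ne_zero hn
  exact subsingleton_ext_succ_box extendsFromBoxes_constExt_univ l u n

lemma bijective_incl_comp_ext {l u l' u' : ι → ℝ} (hle : box hψ l' u' ≤ box hψ l u)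
    (h : ∀ i, l' i < u' i) (n : ℕ) : Function.Bijective
      fun x : Ext (constExt k (box hψ l u : Set X)) (constExt k (Set.univ : Set X)) n =>
        (Ext.mk₀ (constExt.incl k (isOpenIn_of_le hle))).comp x (zero_add n) := by
  cases n with
  | zero =>
    rw [← Function.Bijective.of_comp_iff _ (Ext.mk₀_bijective _ _),
      ← Function.Bijective.of_comp_iff' (Ext.addEquiv₀ (C := ModSheaf k X)).bijective,
      ← Function.Bijective.of_comp_iff' (constExt.homEquiv _ _).bijective]
    convert! (constExt.res_bijective_of_isPreconnected (k := k) hle (isPreconnected_box l u)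
      (isPreconnected_box l' u') (box_nonempty h)).comp (constExt.homEquiv _ _).bijective using 1
    funext a
    refine Eq.trans ?_ (constExt.homEquiv_incl_comp hle _ a)
    exact congrArg _ ((congrArg _ (Ext.mk₀_comp_mk₀ _ _)).trans (Ext.addEquiv₀.apply_symm_apply _))
  | succ n =>
    have vanish := subsingleton_ext_succ_box.{w, u} (hψ := hψ)
      (extendsFromBoxes_constExt_univ (k := k))
    exact ⟨fun _ _ _ => (vanish l u n).elim _ _, fun y => ⟨0, (vanish l' u' n).elim _ _⟩⟩

end BoxExt

/-! ### Mixed cells in a chart -/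

section Cells

variable {ι : Type*} {ψ : (ι → ℝ) → X}

/-- The product `∏ A i` in the chart `ψ`. -/
abbrev cell (ψ : (ι → ℝ) → X) (A : ι → Set ℝ) : Set X := ψ '' Set.univ.pi A

lemma isLocallyClosed_cell [Finite ι] (hψ : IsOpenEmbedding ψ) {A : ι → Set ℝ}
    (hA : ∀ i, IsLocallyClosed (A i)) : IsLocallyClosed (cell ψ A) := by
  refine IsLocallyClosed.image ?_ hψ.isInducing hψ.isOpen_range.isLocallyClosed
  choose U C hU hC hUC using hA
  refine ⟨Set.univ.pi U, Set.univ.pi C, isOpen_set_pi Set.finite_univ fun i _ => hU i,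
    isClosed_set_pi fun i _ => hC i, ?_⟩
  rw [funext hUC, Set.pi_inter_distrib]

lemma mem_univ_pi_update {A : ι → Set ℝ} {i : ι} {I : Set ℝ} {v : ι → ℝ} :
    v ∈ Set.univ.pi (Function.update A i I) ↔ v i ∈ I ∧ ∀ j ≠ i, v j ∈ A j :=
  Set.mem_univ_pi.trans (Function.forall_update_iff A fun j B => v j ∈ B)

lemma isOpenIn_cell (hψ : IsOpenEmbedding ψ) (A : ι → Set ℝ) (i : ι) {I J : Set ℝ}
    (hJ : IsOpen J) (hJI : J ⊆ I) :
    IsOpenIn (cell ψ (Function.update A i J)) (cell ψ (Function.update A i I)) := by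
  refine ⟨ψ '' (Function.eval i ⁻¹' J), hψ.isOpenMap _ (hJ.preimage (continuous_apply i)), ?_⟩
  rw [← Set.image_inter hψ.injective]
  refine congrArg _ (Set.ext fun v => ?_)
  rw [Set.mem_inter_iff, mem_univ_pi_update, mem_univ_pi_update, and_right_comm]
  exact and_congr_left fun _ => and_iff_right_of_imp fun hv => hJI hv

lemma cell_sdiff_cell (hψ : Function.Injective ψ) (A : ι → Set ℝ) (i : ι) (I J : Set ℝ) :
    cell ψ (Function.update A i I) \ cell ψ (Function.update A i J) =
      cell ψ (Function.update A i (I \ J)) := by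
  rw [← Set.image_sdiff hψ]
  refine congrArg _ (Set.ext fun v => ?_)
  simp only [Set.mem_sdiff, mem_univ_pi_update]
  tauto

/-- A product whose factors are singletons in the directions `s` and bounded nonempty open
intervals in the other directions. -/
def IsMixedCell (s : Finset ι) (A : ι → Set ℝ) : Prop :=
  ∀ i, if i ∈ s then ∃ v, A i = {v} else ∃ a b, a < b ∧ A i = Set.Ioo a b

lemma IsMixedCell.update {s : Finset ι} {A : ι → Set ℝ} {i : ι} (hi : i ∉ s)
    (h : IsMixedCell (insert i s) A) {a b : ℝ} (hab : a < b) :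
    IsMixedCell s (Function.update A i (Set.Ioo a b)) := by
  refine (Function.forall_update_iff A (fun j B => if j ∈ s then ∃ v, B = {v} else
    ∃ a b, a < b ∧ B = Set.Ioo a b)).2 ⟨?_, fun j hj => ?_⟩
  · rw [if_neg hi]
    exact ⟨a, b, hab, rfl⟩
  · simpa only [Finset.mem_insert, hj, false_or] using h j

lemma IsMixedCell.exists_eq_singleton {s : Finset ι} {A : ι → Set ℝ} {i : ι} (hi : i ∈ s)
    (h : IsMixedCell s A) : ∃ v, A i = {v} := by
  simpa only [hi, if_true] using h i

lemma IsMixedCell.isLocallyClosed {s : Finset ι} {A : ι → Set ℝ} (h : IsMixedCell s A) (i : ι) :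
    IsLocallyClosed (A i) := by
  have hi := h i
  split_ifs at hi
  · obtain ⟨v, hv⟩ := hi
    exact hv ▸ isClosed_singleton.isLocallyClosed
  · obtain ⟨a, b, -, hA⟩ := hi
    exact hA ▸ isOpen_Ioo.isLocallyClosed

lemma IsMixedCell.exists_eq_Ioo {A : ι → Set ℝ} (h : IsMixedCell ∅ A) :
    ∃ l u : ι → ℝ, (∀ i, l i < u i) ∧ A = fun i => Set.Ioo (l i) (u i) := by
  choose l u hlu hA using fun i => by
    simpa only [Finset.notMem_empty, if_false] using h i
  exact ⟨l, u, hlu, funext hA⟩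

end Cells

section CellExt

open Abelian

variable {ι : Type*} [Finite ι] {ψ : (ι → ℝ) → X}

section Direction

variable {A : ι → Set ℝ} {i : ι} {I J : Set ℝ}

lemma cell_shortExact (hψ : IsOpenEmbedding ψ) (hA : ∀ j, IsLocallyClosed (A j))
    (hI : IsLocallyClosed I) (hJ : IsOpen J) (hJI : J ⊆ I) :
    (constExt.shortComplex k (isOpenIn_cell hψ A i hJ hJI)).ShortExact :=
  constExt.shortExact _ (isLocallyClosed_cell hψ
    ((Function.forall_update_iff A fun _ => IsLocallyClosed).2 ⟨hI, fun j _ => hA j⟩))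

variable [HasExt.{w} (ModSheaf k X)] {Y : ModSheaf k X}

lemma extVanishes_cell_sdiff (hψ : IsOpenEmbedding ψ)
    (hA : ∀ j, IsLocallyClosed (A j)) (hI : IsLocallyClosed I) (hJ : IsOpen J) (hJI : J ⊆ I)
    (h₁ : ExtVanishes (constExt k (cell ψ (Function.update A i J))) Y)
    (h₂ : ExtVanishes (constExt k (cell ψ (Function.update A i I))) Y) :
    ExtVanishes (constExt k (cell ψ (Function.update A i (I \ J)))) Y := by
  rw [← cell_sdiff_cell hψ.injective]
  exact .third (cell_shortExact hψ hA hI hJ hJI) h₁ h₂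

lemma extConcentrated_cell_sdiff {M : Type*} [AddCommGroup M] {d : ℕ} (hψ : IsOpenEmbedding ψ)
    (hA : ∀ j, IsLocallyClosed (A j)) (hI : IsLocallyClosed I) (hJ : IsOpen J) (hJI : J ⊆ I)
    (h₁ : ExtConcentrated M d (constExt k (cell ψ (Function.update A i J))) Y)
    (h₂ : ExtVanishes (constExt k (cell ψ (Function.update A i I))) Y) :
    ExtConcentrated M (d + 1) (constExt k (cell ψ (Function.update A i (I \ J)))) Y := by
  rw [← cell_sdiff_cell hψ.injective]
  exact .succ (cell_shortExact hψ hA hI hJ hJI) h₁ h₂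

lemma extVanishes_cell_singleton (hψ : IsOpenEmbedding ψ) (hA : ∀ j, IsLocallyClosed (A j))
    (h : ∀ a b, a < b → ExtVanishes (constExt k (cell ψ (Function.update A i (Set.Ioo a b)))) Y)
    (v : ℝ) : ExtVanishes (constExt k (cell ψ (Function.update A i {v}))) Y := by
  have halfOpen :
      ExtVanishes (constExt k (cell ψ (Function.update A i (Set.Ico v (v + 1))))) Y := by
    rw [← Ioo_sdiff_Ioo_left (sub_one_lt v)]
    exact extVanishes_cell_sdiff hψ hA isLocallyClosed_Ioo isOpen_Ioo
      (Set.Ioo_subset_Ioo_right (by linarith)) (h _ _ (by linarith)) (h _ _ (by linarith))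
  rw [← Set.Ico_sdiff_Ioo_same (lt_add_one v)]
  exact extVanishes_cell_sdiff hψ hA isLocallyClosed_Ico isOpen_Ioo Set.Ioo_subset_Ico_self
    (h _ _ (lt_add_one v)) halfOpen

end Direction

variable [HasExt.{w} (ModSheaf k X)] {s : Finset ι} {A : ι → Set ℝ} {i : ι}

lemma extVanishes_halfOpen_box (hψ : IsOpenEmbedding ψ) {l u : ι → ℝ} (hlu : ∀ j, l j < u j)
    (i : ι) {c b : ℝ} (hcb : c < b) :
    ExtVanishes
      (constExt k (cell ψ (Function.update (fun j => Set.Ioo (l j) (u j)) i (Set.Ico c b))))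
      (constExt k (Set.univ : Set X)) := by
  have cell_eq_box (x y : ℝ) :
      cell ψ (Function.update (fun j => Set.Ioo (l j) (u j)) i (Set.Ioo x y)) =
        box hψ (Function.update l i x) (Function.update u i y) := by
    refine congrArg (fun A => cell ψ A) (funext fun j => ?_)
    exact (Function.apply_update₂ (fun _ => Set.Ioo) l u i x y j).symm
  have hle : box hψ (Function.update l i (c - 1)) (Function.update u i c) ≤
      box hψ (Function.update l i (c - 1)) (Function.update u i b) :=
    box_mono (fun _ => le_rfl) (update_le_update_iff.2 ⟨hcb.le, fun _ _ => le_rfl⟩)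
  rw [← Ioo_sdiff_Ioo_left (sub_one_lt c), ← cell_sdiff_cell hψ.injective, cell_eq_box,
    cell_eq_box]
  refine .of_bijective (constExt.shortExact (isOpenIn_of_le hle)
    (Opens.isOpen _).isLocallyClosed) (bijective_incl_comp_ext hle fun j => ?_)
  rcases eq_or_ne j i with rfl | hj
  · simpa only [Function.update_self] using sub_one_lt c
  · simpa only [Function.update_of_ne hj] using hlu j

lemma IsMixedCell.extVanishes_update_Ico (hψ : IsOpenEmbedding ψ) (hA : IsMixedCell s A)
    (hi : i ∉ s) {c b : ℝ} (hcb : c < b) :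
    ExtVanishes (constExt k (cell ψ (Function.update A i (Set.Ico c b))))
      (constExt k (Set.univ : Set X)) := by
  induction s using Finset.induction_on generalizing A with
  | empty =>
    obtain ⟨l, u, hlu, rfl⟩ := hA.exists_eq_Ioo
    exact extVanishes_halfOpen_box hψ hlu i hcb
  | insert j s hj ih =>
    obtain ⟨v, hv⟩ := hA.exists_eq_singleton (Finset.mem_insert_self j s)
    have hij : i ≠ j := fun h => hi (h ▸ Finset.mem_insert_self j s)
    rw [show A = Function.update A j {v} by rw [← hv, Function.update_eq_self],
      Function.update_comm hij.symm]
    refine extVanishes_cell_singleton hψ ((Function.forall_update_iff A fun _ => IsLocallyClosed).2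
      ⟨isLocallyClosed_Ico, fun m _ => hA.isLocallyClosed m⟩) (fun a b hab => ?_) v
    rw [Function.update_comm hij]
    exact ih (hA.update hj hab) fun h => hi (Finset.mem_insert_of_mem h)

theorem IsMixedCell.extConcentrated (hψ : IsOpenEmbedding ψ) (hA : IsMixedCell s A) :
    ExtConcentrated k s.card (constExt k (cell ψ A)) (constExt k (Set.univ : Set X)) := by
  induction s using Finset.induction_on generalizing A with
  | empty =>
    obtain ⟨l, u, hlu, rfl⟩ := hA.exists_eq_Ioo
    exact extConcentrated_box (hψ := hψ) hlu
  | insert i s hi ih =>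
    obtain ⟨v, hv⟩ := hA.exists_eq_singleton (Finset.mem_insert_self i s)
    have openCell := hA.update hi (lt_add_one v)
    have halfOpen := openCell.extVanishes_update_Ico (k := k) hψ hi (lt_add_one v)
    rw [Function.update_idem] at halfOpen
    rw [Finset.card_insert_of_notMem hi, ← Function.update_eq_self i A, hv,
      ← Set.Ico_sdiff_Ioo_same (lt_add_one v)]
    exact extConcentrated_cell_sdiff hψ hA.isLocallyClosed isLocallyClosed_Ico isOpen_Ioo
      Set.Ioo_subset_Ico_self (ih openCell) halfOpen

end CellExt

lemma extConcentrated_skyscraper [T1Space X]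
    [HasExt.{w} (ModSheaf k X)] {ι : Type*} [Fintype ι] {ψ : (ι → ℝ) → X}
    (hψ : IsOpenEmbedding ψ) (v : ι → ℝ) :
    ExtConcentrated k (Fintype.card ι) ((skyscraper (ψ v)).obj (ModuleCat.of k k))
      ((constantSheaf (Opens.grothendieckTopology X) (ModuleCat.{u} k)).obj (.of k k)) := by
  have point : IsMixedCell Finset.univ fun i => {v i} := fun i => by
    simp only [Finset.mem_univ, if_true]
    exact ⟨v i, rfl⟩
  have h := point.extConcentrated (k := k) hψ
  rw [cell, Set.univ_pi_singleton, Set.image_singleton] at h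
  exact h.of_iso (constExt.skyscraperIso k (ψ v)) (constExt.constantSheafIso k X).symm

end ModSheaf

/-! ### The gnomonic chart of `SU(2)` -/

namespace SU2

open ComplexConjugate Complex

/-- The matrix in `SU(2)` with first row `(a, b)`. -/
def ofRow (a b : ℂ) (h : normSq a + normSq b = 1) : SU2 :=
  have row_norm : a * conj a + b * conj b = 1 := by
    rw [mul_conj, mul_conj, ← ofReal_add, h, ofReal_one]
  have star_eq : star !![a, b; -conj b, conj a] = !![conj a, -b; conj b, a] := by
    ext i j
    fin_cases i <;> fin_cases j <;> simp [Matrix.star_apply]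
  ⟨⟨!![a, b; -conj b, conj a], Matrix.mem_unitaryGroup_iff.2 <| by
      rw [star_eq, Matrix.mul_fin_two, Matrix.one_fin_two, row_norm,
        show a * -b + b * a = 0 by ring, show -conj b * conj a + conj a * conj b = 0 by ring,
        show -conj b * -b + conj a * a = 1 by linear_combination row_norm]⟩,
    (Matrix.det_fin_two_of _ _ _ _).trans (by linear_combination row_norm)⟩

lemma eq_of_row (g : SU2) :
    g.1.1 = !![g.1.1 0 0, g.1.1 0 1; -conj (g.1.1 0 1), conj (g.1.1 0 0)] := by
  have hdet : g.1.1.det = 1 := g.2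
  have star_eq_adjugate : star g.1.1 = g.1.1.adjugate := by
    rw [← mul_one (star g.1.1), ← one_smul ℂ (1 : Matrix (Fin 2) (Fin 2) ℂ), ← hdet,
      ← Matrix.mul_adjugate, ← mul_assoc, Matrix.mem_unitaryGroup_iff'.1 g.1.2, one_mul]
  rw [Matrix.adjugate_fin_two] at star_eq_adjugate
  have h00 : conj (g.1.1 0 0) = g.1.1 1 1 := congrFun (congrFun star_eq_adjugate 0) 0
  have h10 : conj (g.1.1 0 1) = -g.1.1 1 0 := congrFun (congrFun star_eq_adjugate 1) 0
  rw [h00, h10, neg_neg]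
  exact Matrix.eta_fin_two _

lemma normSq_row (g : SU2) : normSq (g.1.1 0 0) + normSq (g.1.1 0 1) = 1 := by
  have hdet : g.1.1.det = 1 := g.2
  rw [eq_of_row g, Matrix.det_fin_two_of, mul_neg, sub_neg_eq_add, mul_conj, mul_conj] at hdet
  exact_mod_cast hdet

lemma ext_row {g h : SU2} (h₀ : g.1.1 0 0 = h.1.1 0 0) (h₁ : g.1.1 0 1 = h.1.1 0 1) : g = h :=
  Subtype.ext <| Subtype.ext <| by rw [eq_of_row g, eq_of_row h, h₀, h₁]

/-- The distance from the origin to the point `(1, v)` of `ℝ⁴`. -/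
def radius (v : Fin 3 → ℝ) : ℝ := √(1 + v 0 ^ 2 + v 1 ^ 2 + v 2 ^ 2)

lemma radius_pos (v : Fin 3 → ℝ) : 0 < radius v := Real.sqrt_pos.2 (by positivity)

lemma continuous_radius : Continuous radius := by
  unfold radius
  fun_prop

/-- The inverse of the gnomonic projection of `SU(2)`, identified with the unit sphere of `ℝ⁴`
through the first row, onto the tangent space at `1`: radial projection to the sphere of the
affine hyperplane of points `(1, v)`. -/
def gnomonic (v : Fin 3 → ℝ) : SU2 :=
  ofRow ((1 + v 0 * I) / radius v) ((v 1 + v 2 * I) / radius v) <| by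
    have hr : radius v * radius v = 1 + v 0 ^ 2 + v 1 ^ 2 + v 2 ^ 2 :=
      Real.mul_self_sqrt (by positivity)
    have := (radius_pos v).ne'
    have h1 : normSq (1 + v 0 * I) = 1 + v 0 ^ 2 := by
      simpa using normSq_add_mul_I 1 (v 0)
    rw [normSq_div, normSq_div, normSq_ofReal, h1, normSq_add_mul_I, hr]
    field_simp
    ring

/-- The gnomonic projection, meaningful on matrices whose first entry has positive real part. -/
def gnomonicInv (g : SU2) : Fin 3 → ℝ :=
  ![(g.1.1 0 0).im / (g.1.1 0 0).re, (g.1.1 0 1).re / (g.1.1 0 0).re,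
    (g.1.1 0 1).im / (g.1.1 0 0).re]

lemma re_gnomonic (v : Fin 3 → ℝ) : ((gnomonic v).1.1 0 0).re = 1 / radius v := by
  simp [gnomonic, ofRow]

lemma gnomonicInv_gnomonic (v : Fin 3 → ℝ) : gnomonicInv (gnomonic v) = v := by
  funext i
  fin_cases i <;> simp [gnomonicInv, gnomonic, ofRow, (radius_pos v).ne']

lemma radius_gnomonicInv {g : SU2} (hg : 0 < (g.1.1 0 0).re) :
    radius (gnomonicInv g) = 1 / (g.1.1 0 0).re := by
  rw [radius, Real.sqrt_eq_iff_mul_self_eq_of_pos (by positivity)]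
  have h := normSq_row g
  simp only [normSq_apply] at h
  simp only [gnomonicInv, Matrix.cons_val_zero, Matrix.cons_val_one, Matrix.cons_val]
  field_simp
  linarith

lemma gnomonic_gnomonicInv {g : SU2} (hg : 0 < (g.1.1 0 0).re) :
    gnomonic (gnomonicInv g) = g := by
  apply ext_row
  · change (1 + gnomonicInv g 0 * I) / radius (gnomonicInv g) = _
    rw [radius_gnomonicInv hg]
    apply Complex.ext <;> simp [gnomonicInv, hg.ne']
  · change (gnomonicInv g 1 + gnomonicInv g 2 * I) / radius (gnomonicInv g) = _
    rw [radius_gnomonicInv hg]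
    apply Complex.ext <;> simp [gnomonicInv, hg.ne']

lemma continuous_gnomonic : Continuous gnomonic := by
  have hr : Continuous fun v => (radius v : ℂ) := continuous_ofReal.comp continuous_radius
  have hr0 (v : Fin 3 → ℝ) : (radius v : ℂ) ≠ 0 := ofReal_ne_zero.2 (radius_pos v).ne'
  have row₀ : Continuous fun v : Fin 3 → ℝ => (1 + v 0 * I) / radius v :=
    .div (by fun_prop) hr hr0
  have row₁ : Continuous fun v : Fin 3 → ℝ => (v 1 + v 2 * I) / radius v :=
    .div (by fun_prop) hr hr0
  refine .subtype_mk (.subtype_mk (continuous_matrix fun i j => ?_) _) _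
  fin_cases i <;> fin_cases j
  exacts [row₀, row₁, (continuous_conj.comp row₁).neg, continuous_conj.comp row₀]

lemma continuousOn_gnomonicInv : ContinuousOn gnomonicInv {g | 0 < (g.1.1 0 0).re} := by
  have entry (i j : Fin 2) : Continuous fun g : SU2 => g.1.1 i j :=
    (continuous_subtype_val.comp continuous_subtype_val).matrix_elem i j
  have ratio {f : SU2 → ℝ} (hf : Continuous f) :
      ContinuousOn (fun g => f g / (g.1.1 0 0).re) {g | 0 < (g.1.1 0 0).re} :=
    hf.continuousOn.div (continuous_re.comp (entry 0 0)).continuousOn fun _ hg => ne_of_gt hg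
  refine continuousOn_pi.2 fun i => ?_
  fin_cases i
  · exact ratio (continuous_im.comp (entry 0 0))
  · exact ratio (continuous_re.comp (entry 0 1))
  · exact ratio (continuous_im.comp (entry 0 1))

lemma isOpenEmbedding_gnomonic : IsOpenEmbedding gnomonic :=
  OpenPartialHomeomorph.isOpenEmbedding
    { toFun := gnomonic
      invFun := gnomonicInv
      source := Set.univ
      target := {g | 0 < (g.1.1 0 0).re}
      map_source' v _ := (one_div_pos.2 (radius_pos v)).trans_eq (re_gnomonic v).symm
      map_target' _ _ := trivial
      left_inv' v _ := gnomonicInv_gnomonic v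
      right_inv' _ hg := gnomonic_gnomonicInv hg
      open_source := isOpen_univ
      open_target := isOpen_lt continuous_const <| continuous_re.comp <|
        (continuous_subtype_val.comp continuous_subtype_val).matrix_elem 0 0
      continuousOn_toFun := continuous_gnomonic.continuousOn
      continuousOn_invFun := continuousOn_gnomonicInv } rfl

lemma gnomonic_zero : gnomonic 0 = 1 :=
  ext_row (by simp [gnomonic, ofRow, radius]) (by simp [gnomonic, ofRow])

end SU2

theorem ext_skyscraper_K_general {k : Type u} [Field k] {X : TopCat.{u}} [T1Space X]
    [HasExt.{w} (ModSheaf k X)] {ι : Type*} [Fintype ι] (hι : 2 ≤ Fintype.card ι)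
    {ψ : (ι → ℝ) → X} (hψ : IsOpenEmbedding ψ) (v : ι → ℝ) :
    let T : ModSheaf k X := skyscraperSheaf (ψ v) (ModuleCat.of k k)
    let K : ModSheaf k X := kernel <| (stalkSkyscraperSheafAdjunction (ψ v)).unit.app <|
      (constantSheaf (Opens.grothendieckTopology X) (ModuleCat.{u} k)).obj (.of k k)
    Nonempty (Abelian.Ext.{w} T K 1 ≃+ k) ∧
      Nonempty (Abelian.Ext.{w} T K (Fintype.card ι) ≃+ k) ∧
        ∀ n, n ≠ 1 → n ≠ Fintype.card ι → Subsingleton (Abelian.Ext.{w} T K n) := by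
  intro T K
  let S := ModSheaf.unitShortComplex (ψ v)
    ((constantSheaf (Opens.grothendieckTopology X) (ModuleCat.{u} k)).obj (.of k k))
  have hS : S.ShortExact := ModSheaf.unitShortComplex_shortExact _ _
  have injective_X₃ : Injective S.X₃ := ModSheaf.injective_skyscraper _ _
  have hom_X₃ : (T ⟶ S.X₃) ≃+ k :=
    (ModSheaf.skyscraperHomEquiv (ψ v) _).trans (ModSheaf.stalkConstantSheafEquiv k (ψ v))
  obtain ⟨h₁, h⟩ := (ModSheaf.extConcentrated_skyscraper hψ v).ext_first_of_injective hS hι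
  exact ⟨⟨h₁.some.trans hom_X₃⟩, h⟩

/-- `Ext^n(i_*ℚ, K) ≅ ℚ` for `n ∈ {1, 3}`, and `Ext^n(i_*ℚ, K) = 0` otherwise. -/
theorem ext_skyscraper_K :
    (Nonempty ((Abelian.Ext skyQ KK 1) ≃+ ℚ)) ∧
    (Nonempty ((Abelian.Ext skyQ KK 3) ≃+ ℚ)) ∧
    (∀ n : ℕ, n ≠ 1 → n ≠ 3 → Subsingleton (Abelian.Ext skyQ KK n)) := by
  have h := ext_skyscraper_K_general (k := ℚ) (X := GTop) (ι := Fin 3) (by simp)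
    SU2.isOpenEmbedding_gnomonic 0
  rw [SU2.gnomonic_zero] at h
  exact h

end
end

section
/- In the abelian category Sh(G) of sheaves of ℚ-vector spaces on G = SU(2), one has Ext^n_{Sh(G)}(ℚ_G, K) ≅ ℚ for n = 3, and Ext^n_{Sh(G)}(ℚ_G, K) = 0 for all other integers n. -/
open CategoryTheory TopologicalSpace Limits

noncomputable section

attribute [local instance] Classical.propDecidable

/-!
`Ext` out of the constant sheaf is the cohomology of the sphere. All cohomology is taken on germs of
neighbourhoods of closed sets `Z`. If `Z` is connected and contains the base point `x`, then `K` has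
no nonzero section near `Z`, a locally constant function with zero germ at `x` being zero there. If
moreover `Z` is a closed hemisphere, the higher cohomology of `K` near `Z` vanishes as well: the
orthogonal projection identifies `Z` with a ball, and a class not vanishing near a minimal convex
subset would, by Mayer–Vietoris, not vanish near one of its two halves.

Cut a great sphere through `x` along an equator through `x`. As nothing survives near the two
hemispheres, Mayer–Vietoris shifts the cohomology of the equator up by one degree. The induction
starts from a pair `{x, y}` of antipodal points, near which `K` has just the constants at `y`.
-/

universe w u

section PushoutConnecting

open Abelian

variable {C : Type*} [Category C] [Abelian C]
  {X₁ X₂ X₃ X₄ : C} {f : X₁ ⟶ X₂} {g : X₁ ⟶ X₃} {inl : X₂ ⟶ X₄} {inr : X₃ ⟶ X₄}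

lemma shortExact_shortComplex_of_isPushout (sq : IsPushout f g inl inr) [Mono f] :
    sq.shortComplex.ShortExact where
  exact := sq.exact_shortComplex
  mono_f := inferInstanceAs (Mono (biprod.lift f (-g)))
  epi_g := sq.epi_shortComplex_g

variable [HasExt.{w} C] {Y : C} {n : ℕ}

lemma mk₀_biprod_lift_neg_comp (x : Ext (X₂ ⊞ X₃) Y n) :
    (Ext.mk₀ (biprod.lift f (-g))).comp x (zero_add n) =
      (Ext.mk₀ f).comp ((Ext.mk₀ biprod.inl).comp x (zero_add n)) (zero_add n) +
        (Ext.mk₀ g).comp ((Ext.mk₀ (-biprod.inr)).comp x (zero_add n)) (zero_add n) := by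
  rw [Ext.mk₀_comp_mk₀_assoc, Ext.mk₀_comp_mk₀_assoc, ← Ext.add_comp, ← Ext.mk₀_add]
  congr 2
  apply biprod.hom_ext <;> simp

lemma mk₀_biprod_desc_comp_eq_zero {c : Ext X₄ Y n}
    (hl : (Ext.mk₀ inl).comp c (zero_add n) = 0) (hr : (Ext.mk₀ inr).comp c (zero_add n) = 0) :
    (Ext.mk₀ (biprod.desc inl inr)).comp c (zero_add n) = 0 :=
  Ext.biprod_ext (by simpa using hl) (by simpa using hr)

lemma ext_zero_eq_zero_of_isPushout (sq : IsPushout f g inl inr) {c : Ext X₄ Y 0}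
    (hl : (Ext.mk₀ inl).comp c (zero_add _) = 0) (hr : (Ext.mk₀ inr).comp c (zero_add _) = 0) :
    c = 0 := by
  have := sq.epi_shortComplex_g
  exact Ext.precomp_mk₀_injective_of_epi Y sq.shortComplex.g
    ((mk₀_biprod_desc_comp_eq_zero hl hr).trans (map_zero _).symm)

variable (sq : IsPushout f g inl inr) [Mono f]

variable (Y n) in
/-- The connecting homomorphism of the Mayer–Vietoris sequence of `Ext _ Y` attached to a pushout
square whose top map is a monomorphism, with the sign of `IsPushout.shortComplex`. -/
def pushoutConnecting : Ext X₁ Y n →+ Ext X₄ Y (n + 1) :=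
  (shortExact_shortComplex_of_isPushout sq).extClass.precomp Y (add_comm 1 n)

lemma pushoutConnecting_comp_left (a : Ext X₂ Y n) :
    pushoutConnecting Y n sq ((Ext.mk₀ f).comp a (zero_add n)) = 0 := by
  have h : (Ext.mk₀ f).comp a (zero_add n) =
      (Ext.mk₀ (biprod.lift f (-g))).comp ((Ext.mk₀ biprod.fst).comp a (zero_add n))
        (zero_add n) := by
    simp
  exact (congrArg _ h).trans
    ((shortExact_shortComplex_of_isPushout sq).extClass_comp_assoc _ (h := add_comm 1 n))

lemma pushoutConnecting_comp_right (b : Ext X₃ Y n) :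
    pushoutConnecting Y n sq ((Ext.mk₀ g).comp b (zero_add n)) = 0 := by
  have h : (Ext.mk₀ g).comp b (zero_add n) =
      (Ext.mk₀ (biprod.lift f (-g))).comp ((Ext.mk₀ (-biprod.snd)).comp b (zero_add n))
        (zero_add n) := by
    simp
  exact (congrArg _ h).trans
    ((shortExact_shortComplex_of_isPushout sq).extClass_comp_assoc _ (h := add_comm 1 n))

lemma exists_comp_add_comp_eq_of_pushoutConnecting_eq_zero {c : Ext X₁ Y n}
    (hc : pushoutConnecting Y n sq c = 0) :
    ∃ (a : Ext X₂ Y n) (b : Ext X₃ Y n),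
      (Ext.mk₀ f).comp a (zero_add n) + (Ext.mk₀ g).comp b (zero_add n) = c := by
  obtain ⟨x, rfl⟩ := Ext.contravariant_sequence_exact₁ (shortExact_shortComplex_of_isPushout sq) Y c
    (add_comm 1 n) hc
  exact ⟨_, _, (mk₀_biprod_lift_neg_comp x).symm⟩

lemma exists_pushoutConnecting_eq {c : Ext X₄ Y (n + 1)}
    (hl : (Ext.mk₀ inl).comp c (zero_add _) = 0) (hr : (Ext.mk₀ inr).comp c (zero_add _) = 0) :
    ∃ e, pushoutConnecting Y n sq e = c :=
  Ext.contravariant_sequence_exact₃ (shortExact_shortComplex_of_isPushout sq) Y c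
    (mk₀_biprod_desc_comp_eq_zero hl hr) (add_comm 1 n)

lemma pushoutConnecting_naturality {X₁' X₂' X₃' X₄' : C} {f' : X₁' ⟶ X₂'} {g' : X₁' ⟶ X₃'}
    {inl' : X₂' ⟶ X₄'} {inr' : X₃' ⟶ X₄'} (sq' : IsPushout f' g' inl' inr') [Mono f']
    {τ₁ : X₁' ⟶ X₁} {τ₂ : X₂' ⟶ X₂} {τ₃ : X₃' ⟶ X₃} {τ₄ : X₄' ⟶ X₄}
    (hf : τ₁ ≫ f = f' ≫ τ₂) (hg : τ₁ ≫ g = g' ≫ τ₃)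
    (hl : τ₂ ≫ inl = inl' ≫ τ₄) (hr : τ₃ ≫ inr = inr' ≫ τ₄) (c : Ext X₁ Y n) :
    (Ext.mk₀ τ₄).comp (pushoutConnecting Y n sq c) (zero_add _) =
      pushoutConnecting Y n sq' ((Ext.mk₀ τ₁).comp c (zero_add n)) := by
  have comm₁₂ : τ₁ ≫ biprod.lift f (-g) = biprod.lift f' (-g') ≫ biprod.map τ₂ τ₃ := by
    apply biprod.hom_ext <;> simp [hf, hg]
  have comm₂₃ : biprod.map τ₂ τ₃ ≫ biprod.desc inl inr = biprod.desc inl' inr' ≫ τ₄ := by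
    apply biprod.hom_ext' <;> simp [hl, hr]
  have naturality := ShortComplex.ShortExact.extClass_naturality
    (shortExact_shortComplex_of_isPushout sq') (shortExact_shortComplex_of_isPushout sq)
    ⟨τ₁, biprod.map τ₂ τ₃, τ₄, comm₁₂, comm₂₃⟩
  refine (Ext.comp_assoc (Ext.mk₀ _) _ c (zero_add 1) (add_comm 1 n)
    (by omega)).symm.trans (Eq.trans ?_ (Ext.comp_assoc _ (Ext.mk₀ _) c (add_zero 1) (zero_add n)
      (by omega)))
  exact congrArg (Ext.comp · c (add_comm 1 n)) naturality.symm

end PushoutConnecting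

section FreeSheaf

open Opposite

variable (R : Type u) [Ring R] (X : TopCat.{u})

/-- Sheaves of `R`-modules on `X`. -/
abbrev ModuleSheaf : Type (u + 1) := Sheaf (Opens.grothendieckTopology X) (ModuleCat.{u} R)

/-- The sheafification of the free presheaf on an open set `U`; it represents sections over `U`. -/
def freeSheaf : Opens X ⥤ ModuleSheaf R X :=
  yoneda ⋙ (Functor.whiskeringRight _ _ _).obj (ModuleCat.free R) ⋙ presheafToSheaf _ _

variable {R X}

/-- The universal section of `freeSheaf R X` over `U`, corresponding to the identity of `U`. -/
def freeSection (U : Opens X) : ((freeSheaf R X).obj U).obj.obj (op U) :=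
  (toSheafify (Opens.grothendieckTopology X) (yoneda.obj U ⋙ ModuleCat.free R)).app (op U)
    (ModuleCat.freeMk (𝟙 U))

/-- Evaluation at `freeSection U`, as an equivalence. -/
def freeSheafHomEquiv (F : ModuleSheaf R X) (U : Opens X) :
    ((freeSheaf R X).obj U ⟶ F) ≃+ F.obj.obj (op U) :=
  AddEquiv.ofBijective
    (⟨⟨fun f ↦ f.hom.app (op U) (freeSection U), rfl⟩, fun _ _ ↦ rfl⟩ :
      ((freeSheaf R X).obj U ⟶ F) →+ F.obj.obj (op U))
    (((sheafificationAdjunction _ _).homEquiv _ F).trans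
      ((((ModuleCat.adj R).whiskerRight (Opens X)ᵒᵖ).homEquiv (yoneda.obj U) F.obj).trans
        yonedaEquiv)).bijective

lemma freeSheafHomEquiv_comp {F G : ModuleSheaf R X} {U : Opens X}
    (f : (freeSheaf R X).obj U ⟶ F) (φ : F ⟶ G) :
    freeSheafHomEquiv G U (f ≫ φ) = φ.hom.app (op U) (freeSheafHomEquiv F U f) := rfl

lemma freeSheaf_map_freeSection {U V : Opens X} (i : V ⟶ U) :
    ((freeSheaf R X).map i).hom.app (op V) (freeSection V) =
      ((freeSheaf R X).obj U).obj.map i.op (freeSection U) := by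
  have h1 := ConcreteCategory.congr_hom (congr_app (toSheafify_naturality
    (Opens.grothendieckTopology X) (Functor.whiskerRight (yoneda.map i) (ModuleCat.free R))) (op V))
      (ModuleCat.freeMk (𝟙 V))
  have h2 := ConcreteCategory.congr_hom ((toSheafify (Opens.grothendieckTopology X)
    (yoneda.obj U ⋙ ModuleCat.free R)).naturality i.op) (ModuleCat.freeMk (𝟙 U))
  refine h1.symm.trans (Eq.trans ?_ h2)
  refine congrArg ((toSheafify _ (yoneda.obj U ⋙ ModuleCat.free R)).app (op V)) ?_
  refine (ModuleCat.free_map_apply _ _).trans (Eq.trans ?_ (ModuleCat.free_map_apply _ _).symm)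
  rfl

lemma freeSheafHomEquiv_map_comp {F : ModuleSheaf R X} {U V : Opens X} (i : V ⟶ U)
    (f : (freeSheaf R X).obj U ⟶ F) :
    freeSheafHomEquiv F V ((freeSheaf R X).map i ≫ f) =
      F.obj.map i.op (freeSheafHomEquiv F U f) := by
  refine Eq.trans ?_ (ConcreteCategory.congr_hom (f.hom.naturality i.op) (freeSection U))
  exact congrArg (f.hom.app (op V)) (freeSheaf_map_freeSection i)

lemma exists_comp_eq_map_comp_of_epi {F G : ModuleSheaf R X} {U : Opens X} (p : F ⟶ G) [Epi p]
    (f : (freeSheaf R X).obj U ⟶ G) {x : X} (hx : x ∈ U) :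
    ∃ (V : Opens X) (h : V ≤ U) (t : (freeSheaf R X).obj V ⟶ F),
      x ∈ V ∧ t ≫ p = (freeSheaf R X).map (homOfLE h) ≫ f := by
  have : Sheaf.IsLocallySurjective p := (Sheaf.isLocallySurjective_iff_epi' _ p).2 inferInstance
  obtain ⟨V, i, ⟨s, hs⟩, hxV⟩ :=
    Presheaf.imageSieve_mem (Opens.grothendieckTopology X) p.hom (freeSheafHomEquiv G U f) x hx
  obtain ⟨t, rfl⟩ := (freeSheafHomEquiv F V).surjective s
  refine ⟨V, leOfHom i, t, hxV, (freeSheafHomEquiv G V).injective ?_⟩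
  rw [freeSheafHomEquiv_comp, freeSheafHomEquiv_map_comp]
  exact hs

instance : (ModuleCat.free.{u} R).IsLeftAdjoint := (ModuleCat.adj.{u} R).isLeftAdjoint

lemma isPushout_freeSheaf (U V : Opens X) :
    IsPushout ((freeSheaf R X).map (homOfLE (inf_le_left : U ⊓ V ≤ U)))
      ((freeSheaf R X).map (homOfLE (inf_le_right : U ⊓ V ≤ V)))
      ((freeSheaf R X).map (homOfLE (le_sup_left : U ≤ U ⊔ V)))
      ((freeSheaf R X).map (homOfLE (le_sup_right : V ≤ U ⊔ V))) :=
  ((Opens.mayerVietorisSquare U V).isPushout.map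
    (Sheaf.composeAndSheafify (Opens.grothendieckTopology X) (ModuleCat.free R))).of_iso
      ((Square.mapFunctor.mapIso (presheafToSheafCompComposeAndSheafifyIso _ _)).app
        ((Opens.mayerVietorisSquare U V).map yoneda))

instance {U V : Opens X} (i : U ⟶ V) : Mono ((freeSheaf R X).map i) := by
  have : Mono i := ⟨fun _ _ _ ↦ Subsingleton.elim _ _⟩
  have : Mono (Functor.whiskerRight (yoneda.map i) (ModuleCat.free R)) := by
    refine (NatTrans.mono_iff_mono_app _).2 fun W ↦ (ModuleCat.mono_iff_injective _).2 ?_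
    exact Finsupp.mapDomain_injective
      ((mono_iff_injective _).1 ((NatTrans.mono_iff_mono_app _).1 inferInstance W))
  exact inferInstanceAs (Mono ((presheafToSheaf _ _).map
    (Functor.whiskerRight (yoneda.map i) (ModuleCat.free R))))

lemma isZero_freeSheaf_bot : IsZero ((freeSheaf R X).obj ⊥) := by
  have h : Subsingleton (((freeSheaf R X).obj ⊥).obj.obj (op ⊥)) :=
    ModuleCat.subsingleton_of_isZero
      ((TopCat.Sheaf.isTerminalOfEmpty ((freeSheaf R X).obj ⊥)).isZero)
  exact (IsZero.iff_id_eq_zero _).2 ((freeSheafHomEquiv _ ⊥).injective (Subsingleton.elim _ _))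

end FreeSheaf

section SheafCohomology

open Abelian Opposite

variable {R : Type u} [Ring R] {X : TopCat.{u}} [HasExt.{w} (ModuleSheaf R X)]

/-- The cohomology of `U` with coefficients in `F`, computed as `Ext` out of the free sheaf
on `U`. -/
abbrev Cohomology (F : ModuleSheaf R X) (n : ℕ) (U : Opens X) : Type w :=
  Ext ((freeSheaf R X).obj U) F n

namespace Cohomology

variable {F : ModuleSheaf R X} {n : ℕ} {U V W U' V' : Opens X}

/-- Restriction of cohomology classes to a smaller open set. -/
def res (h : V ≤ U) : Cohomology F n U →+ Cohomology F n V :=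
  (Ext.mk₀ ((freeSheaf R X).map (homOfLE h))).precomp F (zero_add n)

lemma res_apply (h : V ≤ U) (c : Cohomology F n U) :
    res h c = (Ext.mk₀ ((freeSheaf R X).map (homOfLE h))).comp c (zero_add n) := rfl

@[simp]
lemma res_self (c : Cohomology F n U) : res le_rfl c = c := by
  have : homOfLE (le_refl U) = 𝟙 U := rfl
  rw [res_apply, this, (freeSheaf R X).map_id, Ext.mk₀_id_comp]

@[simp]
lemma res_res (hV : V ≤ U) (hW : W ≤ V) (c : Cohomology F n U) :
    res hW (res hV c) = res (hW.trans hV) c := by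
  simp only [res_apply, Ext.mk₀_comp_mk₀_assoc, ← Functor.map_comp, homOfLE_comp]

variable (F n U V) in
/-- The connecting homomorphism of the Mayer–Vietoris sequence of `U` and `V`. -/
def connecting : Cohomology F n (U ⊓ V) →+ Cohomology F (n + 1) (U ⊔ V) :=
  pushoutConnecting F n (isPushout_freeSheaf U V)

lemma connecting_res_left (a : Cohomology F n U) :
    connecting F n U V (res inf_le_left a) = 0 :=
  pushoutConnecting_comp_left (isPushout_freeSheaf U V) a

lemma connecting_res_right (b : Cohomology F n V) :
    connecting F n U V (res inf_le_right b) = 0 :=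
  pushoutConnecting_comp_right (isPushout_freeSheaf U V) b

lemma exists_res_add_res_eq {c : Cohomology F n (U ⊓ V)} (hc : connecting F n U V c = 0) :
    ∃ (a : Cohomology F n U) (b : Cohomology F n V),
      res inf_le_left a + res inf_le_right b = c :=
  exists_comp_add_comp_eq_of_pushoutConnecting_eq_zero (isPushout_freeSheaf U V) hc

lemma exists_connecting_eq {c : Cohomology F (n + 1) (U ⊔ V)} (hU : res le_sup_left c = 0)
    (hV : res le_sup_right c = 0) : ∃ e, connecting F n U V e = c :=
  exists_pushoutConnecting_eq (isPushout_freeSheaf U V) hU hV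

lemma eq_zero_of_res_eq_zero {c : Cohomology F 0 (U ⊔ V)} (hU : res le_sup_left c = 0)
    (hV : res le_sup_right c = 0) : c = 0 :=
  ext_zero_eq_zero_of_isPushout (isPushout_freeSheaf U V) hU hV

lemma res_connecting (hU : U' ≤ U) (hV : V' ≤ V) (c : Cohomology F n (U ⊓ V)) :
    res (sup_le_sup hU hV) (connecting F n U V c) =
      connecting F n U' V' (res (inf_le_inf hU hV) c) := by
  refine pushoutConnecting_naturality (isPushout_freeSheaf U V) (isPushout_freeSheaf U' V')
    (τ₂ := (freeSheaf R X).map (homOfLE hU)) (τ₃ := (freeSheaf R X).map (homOfLE hV))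
    ?_ ?_ ?_ ?_ c <;> simp only [← Functor.map_comp, homOfLE_comp]

instance subsingleton_bot : Subsingleton (Cohomology F n ⊥) :=
  subsingleton_of_forall_eq 0 fun c ↦ by
    rw [← Ext.mk₀_id_comp c, isZero_freeSheaf_bot.eq_of_src (𝟙 _) 0, Ext.mk₀_zero, Ext.zero_comp]

/-- Extension of a class by zero to a disjoint open set `U`; disjointness makes `U ⊔ V` a
coproduct. -/
def extendByZero (h : U ⊓ V = ⊥) : Cohomology F n V →+ Cohomology F n (U ⊔ V) :=
  (Ext.mk₀ ((isPushout_freeSheaf U V).desc 0 (𝟙 _)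
    ((h ▸ isZero_freeSheaf_bot : IsZero ((freeSheaf R X).obj (U ⊓ V))).eq_of_src _ _))).precomp F
      (zero_add n)

lemma res_left_extendByZero (h : U ⊓ V = ⊥) (c : Cohomology F n V) :
    res le_sup_left (extendByZero h c) = 0 := by
  refine (Ext.mk₀_comp_mk₀_assoc _ _ c).trans ?_
  rw [IsPushout.inl_desc, Ext.mk₀_zero, Ext.zero_comp]

lemma res_right_extendByZero (h : U ⊓ V = ⊥) (c : Cohomology F n V) :
    res le_sup_right (extendByZero h c) = c := by
  refine (Ext.mk₀_comp_mk₀_assoc _ _ c).trans ?_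
  rw [IsPushout.inr_desc, Ext.mk₀_id_comp]

variable (F U) in
/-- Cohomology in degree zero is the group of sections. -/
def sectionsEquiv : Cohomology F 0 U ≃+ F.obj.obj (op U) :=
  Ext.addEquiv₀.trans (freeSheafHomEquiv F U)

lemma sectionsEquiv_res (h : V ≤ U) (c : Cohomology F 0 U) :
    sectionsEquiv F V (res h c) = F.obj.map (homOfLE h).op (sectionsEquiv F U c) := by
  obtain ⟨f, rfl⟩ := Ext.addEquiv₀.symm.surjective c
  have : res h (Ext.addEquiv₀.symm f) = Ext.addEquiv₀.symm ((freeSheaf R X).map (homOfLE h) ≫ f) :=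
    Ext.mk₀_comp_mk₀ _ _
  rw [this, sectionsEquiv, sectionsEquiv, AddEquiv.trans_apply, AddEquiv.trans_apply,
    AddEquiv.apply_symm_apply, AddEquiv.apply_symm_apply, freeSheafHomEquiv_map_comp]

lemma res_comp {G : ModuleSheaf R X} {m k : ℕ} (h : V ≤ U) (c : Cohomology F n U) (e : Ext F G m)
    (hk : n + m = k) : res h (c.comp e hk : Cohomology G k U) = (res h c).comp e hk :=
  (Ext.comp_assoc _ c e (zero_add n) hk (by omega)).symm

lemma exists_res_comp_extClass_eq_zero {S : ShortComplex (ModuleSheaf R X)} (hS : S.ShortExact)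
    (b : Cohomology S.X₃ 0 U) {x : X} (hx : x ∈ U) :
    ∃ (V : Opens X) (h : V ≤ U),
      x ∈ V ∧ res h (b.comp hS.extClass (zero_add 1) : Cohomology S.X₁ 1 U) = 0 := by
  obtain ⟨f, rfl⟩ := Ext.addEquiv₀.symm.surjective b
  have := hS.epi_g
  obtain ⟨V, h, t, hxV, ht⟩ := exists_comp_eq_map_comp_of_epi S.g f hx
  refine ⟨V, h, hxV, ?_⟩
  have lift : res h (Ext.addEquiv₀.symm f) = (Ext.mk₀ t).comp (Ext.mk₀ S.g) (zero_add 0) :=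
    (Ext.mk₀_comp_mk₀ _ _).trans ((congrArg Ext.mk₀ ht.symm).trans (Ext.mk₀_comp_mk₀ _ _).symm)
  rw [res_comp, lift, Ext.comp_assoc_of_second_deg_zero, hS.comp_extClass, Ext.comp_zero]

lemma exists_res_eq_zero (c : Cohomology F (n + 1) U) {x : X} (hx : x ∈ U) :
    ∃ (V : Opens X) (h : V ≤ U), x ∈ V ∧ res h c = 0 := by
  have ses (F : ModuleSheaf R X) :
      (ShortComplex.mk _ _ (cokernel.condition (Injective.ι F))).ShortExact :=
    { exact := ShortComplex.exact_cokernel _ }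
  induction n generalizing F with
  | zero =>
    obtain ⟨b, rfl⟩ := Ext.covariant_sequence_exact₁ _ (ses F) c (Ext.eq_zero_of_injective _) rfl
    exact exists_res_comp_extClass_eq_zero (ses F) b hx
  | succ n ih =>
    obtain ⟨b, rfl⟩ := Ext.covariant_sequence_exact₁ _ (ses F) c (Ext.eq_zero_of_injective _) rfl
    obtain ⟨V, h, hxV, hb⟩ := ih b
    exact ⟨V, h, hxV, (res_comp h b _ rfl).trans (by rw [hb, Ext.zero_comp])⟩

end Cohomology

end SheafCohomology

section Shrinking

lemma exists_opens_inf_le_of_normalSpace {X : Type*} [TopologicalSpace X] [NormalSpace X]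
    {A B : Set X} (hA : IsClosed A) (hB : IsClosed B) {U V W : Opens X} (hU : A ⊆ U) (hV : B ⊆ V)
    (hW : A ∩ B ⊆ W) :
    ∃ U' ≤ U, ∃ V' ≤ V, A ⊆ (U' : Set X) ∧ B ⊆ (V' : Set X) ∧ U' ⊓ V' ≤ W := by
  have disj : Disjoint (A \ W) (B \ W) :=
    Set.disjoint_left.2 fun x hx hx' ↦ hx.2 (hW ⟨hx.1, hx'.1⟩)
  obtain ⟨P, Q, hP, hQ, hAP, hBQ, hPQ⟩ :=
    normal_separation (hA.sdiff W.isOpen) (hB.sdiff W.isOpen) disj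
  refine ⟨U ⊓ (⟨P, hP⟩ ⊔ W), inf_le_left, V ⊓ (⟨Q, hQ⟩ ⊔ W), inf_le_left,
    fun x hx ↦ ⟨hU hx, ?_⟩, fun x hx ↦ ⟨hV hx, ?_⟩, ?_⟩
  · exact or_iff_not_imp_right.2 fun hxW ↦ hAP ⟨hx, hxW⟩
  · exact or_iff_not_imp_right.2 fun hxW ↦ hBQ ⟨hx, hxW⟩
  · rintro x ⟨⟨-, hxP | hxW⟩, -, hxQ | hxW'⟩
    exacts [(Set.disjoint_left.1 hPQ hxP hxQ).elim, hxW', hxW, hxW]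

lemma exists_mem_subset_of_sInter_subset {X : Type*} [TopologicalSpace X] [CompactSpace X]
    {S : Set (Set X)} (hS : IsChain (· ⊆ ·) S) (hne : S.Nonempty)
    (hclosed : ∀ Z ∈ S, IsClosed Z) {V : Opens X} (hV : ⋂₀ S ⊆ V) : ∃ Z ∈ S, Z ⊆ V := by
  have := hne.to_subtype
  have hdir : Directed (· ⊇ ·) ((↑) : S → Set X) := fun Z Z' ↦
    (hS.total Z.2 Z'.2).elim (⟨Z, subset_rfl, ·⟩) (⟨Z', ·, subset_rfl⟩)
  obtain ⟨Z, hZ⟩ := exists_subset_nhds_of_isCompact' hdir (fun Z ↦ (hclosed Z Z.2).isCompact)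
    (fun Z ↦ hclosed Z Z.2)
    fun x hx ↦ V.isOpen.mem_nhds (hV (Set.sInter_eq_iInter.symm ▸ hx))
  exact ⟨Z, Z.2, hZ⟩

end Shrinking

section Germs

namespace Cohomology

variable {R : Type u} [Ring R] {X : TopCat.{u}} [HasExt.{w} (ModuleSheaf R X)]
  {F : ModuleSheaf R X} {n : ℕ} {U V : Opens X} {A B Z Z' : Set X}

/-- The class `c` has zero image in `colim H^n(V, F)`, over the open neighbourhoods `V ≤ U` of `Z`.
For `Z ⊄ U` this is false. -/
def VanishesNear (c : Cohomology F n U) (Z : Set X) : Prop :=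
  ∃ (V : Opens X) (h : V ≤ U), Z ⊆ V ∧ res h c = 0

lemma VanishesNear.mono {c : Cohomology F n U} (hc : VanishesNear c Z) (h : Z' ⊆ Z) :
    VanishesNear c Z' :=
  let ⟨V, hV, hZ, h0⟩ := hc
  ⟨V, hV, h.trans hZ, h0⟩

lemma VanishesNear.restrict {c : Cohomology F n U} (hc : VanishesNear c Z) (h : V ≤ U)
    (hZ : Z ⊆ V) : VanishesNear (res h c) Z := by
  obtain ⟨W, hW, hZW, h0⟩ := hc
  refine ⟨V ⊓ W, inf_le_left, Set.subset_inter hZ hZW, ?_⟩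
  rw [res_res, ← res_res hW inf_le_right, h0, map_zero]

lemma VanishesNear.of_res {c : Cohomology F n U} {h : V ≤ U} (hc : VanishesNear (res h c) Z) :
    VanishesNear c Z :=
  let ⟨W, hW, hZ, h0⟩ := hc
  ⟨W, hW.trans h, hZ, by rwa [res_res] at h0⟩

lemma VanishesNear.add {c d : Cohomology F n U} (hc : VanishesNear c Z) (hd : VanishesNear d Z) :
    VanishesNear (c + d) Z := by
  obtain ⟨V, hV, hZV, h0⟩ := hc
  obtain ⟨W, hW, hZW, h0'⟩ := hd
  refine ⟨V ⊓ W, inf_le_left.trans hV, Set.subset_inter hZV hZW, ?_⟩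
  rw [map_add, ← res_res hV inf_le_left, h0, ← res_res hW inf_le_right, h0', map_zero, map_zero,
    add_zero]

end Cohomology

variable {R : Type u} [Ring R] {X : TopCat.{u}} [HasExt.{w} (ModuleSheaf R X)]

/-- `colim H^n(U, F) = 0`, over the open neighbourhoods `U` of `Z`. -/
def GermsVanish (F : ModuleSheaf R X) (n : ℕ) (Z : Set X) : Prop :=
  ∀ ⦃U : Opens X⦄, Z ⊆ U → ∀ c : Cohomology F n U, c.VanishesNear Z

/-- Every germ of a class along `A ∩ B` is the sum of a germ along `A` and one along `B`, as needed
to kill the Mayer–Vietoris connecting map. The intersection enters through `U ⊓ V`, for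
neighbourhoods `U` of `A` and `V` of `B`. -/
def GermsSplit (F : ModuleSheaf R X) (n : ℕ) (A B : Set X) : Prop :=
  ∀ ⦃U V : Opens X⦄, A ⊆ U → B ⊆ V → ∀ c : Cohomology F n (U ⊓ V),
    ∃ (U' V' : Opens X) (hU : U' ≤ U) (hV : V' ≤ V) (a : Cohomology F n U')
      (b : Cohomology F n V'), A ⊆ U' ∧ B ⊆ V' ∧
        Cohomology.res inf_le_left a + Cohomology.res inf_le_right b =
          Cohomology.res (inf_le_inf hU hV) c

/-- The map `φ` induces a bijection from `M` to `colim H^n(V, F)`, over the open neighbourhoods `V`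
of `Z`. -/
structure IsGermwiseBijective {F : ModuleSheaf R X} {n : ℕ} {M : Type*} [AddCommGroup M]
    {U : Opens X} (φ : M →+ Cohomology F n U) (Z : Set X) : Prop where
  subset : Z ⊆ U
  eq_zero {m : M} : (φ m).VanishesNear Z → m = 0
  exists_res_eq {V : Opens X} (hV : Z ⊆ V) (c : Cohomology F n V) :
    ∃ (m : M) (W : Opens X) (hU : W ≤ U) (hV : W ≤ V), Z ⊆ W ∧
      Cohomology.res hU (φ m) = Cohomology.res hV c

/-- `colim H^n(U, F)` is isomorphic to `M` through classes defined on one common neighbourhood of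
`Z`. The colimit runs over the open neighbourhoods `U` of `Z`. -/
def GermsIso (F : ModuleSheaf R X) (n : ℕ) (M : Type*) [AddCommGroup M] (Z : Set X) : Prop :=
  ∃ (U : Opens X) (φ : M →+ Cohomology F n U), IsGermwiseBijective φ Z

variable {F : ModuleSheaf R X} {n : ℕ} {M : Type*} [AddCommGroup M] {U V : Opens X}
  {A B : Set X}

open Cohomology

lemma germsVanish_succ_singleton (x : X) : GermsVanish F (n + 1) {x} := fun _ hU c ↦
  let ⟨V, h, hxV, hc⟩ := exists_res_eq_zero c (hU rfl)
  ⟨V, h, Set.singleton_subset_iff.2 hxV, hc⟩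

lemma germsVanish_empty : GermsVanish F n ∅ := fun _ _ _ ↦
  ⟨⊥, bot_le, Set.empty_subset _, Subsingleton.elim _ _⟩

lemma GermsVanish.subsingleton (h : GermsVanish F n Set.univ) : Subsingleton (Cohomology F n ⊤) :=
  subsingleton_of_forall_eq 0 fun c ↦ by
    obtain ⟨V, hV, hVuniv, hc⟩ := h (Set.subset_univ _) c
    obtain rfl : V = ⊤ := top_le_iff.1 hVuniv
    rwa [res_self] at hc

lemma GermsIso.nonempty_addEquiv (h : GermsIso F n M Set.univ) :
    Nonempty (M ≃+ Cohomology F n ⊤) := by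
  obtain ⟨U, φ, hφ⟩ := h
  obtain rfl : U = ⊤ := top_le_iff.1 hφ.subset
  refine ⟨AddEquiv.ofBijective φ ⟨(injective_iff_map_eq_zero φ).2 fun m hm ↦ hφ.eq_zero
    ⟨⊤, le_rfl, subset_rfl, by rw [hm, map_zero]⟩, fun c ↦ ?_⟩⟩
  obtain ⟨m, W, hU, hV, hW, hm⟩ := hφ.exists_res_eq subset_rfl c
  obtain rfl : W = ⊤ := top_le_iff.1 hW
  rw [res_self, res_self] at hm
  exact ⟨m, hm⟩

lemma Cohomology.VanishesNear.union_zero {c : Cohomology F 0 U}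
    (hA : c.VanishesNear A) (hB : c.VanishesNear B) : c.VanishesNear (A ∪ B) := by
  obtain ⟨V, hV, hAV, h0⟩ := hA
  obtain ⟨W, hW, hBW, h0'⟩ := hB
  exact ⟨V ⊔ W, sup_le hV hW, Set.union_subset_union hAV hBW,
    eq_zero_of_res_eq_zero (by rwa [res_res]) (by rwa [res_res])⟩

lemma GermsSplit.vanishesNear_connecting (h : GermsSplit F n A B) (hU : A ⊆ U)
    (hV : B ⊆ V) (c : Cohomology F n (U ⊓ V)) : (connecting F n U V c).VanishesNear (A ∪ B) := by
  obtain ⟨U', V', hU', hV', a, b, hA, hB, hc⟩ := h hU hV c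
  refine ⟨U' ⊔ V', sup_le_sup hU' hV', Set.union_subset_union hA hB, ?_⟩
  rw [res_connecting hU' hV', ← hc, map_add, connecting_res_left, connecting_res_right, add_zero]

lemma Cohomology.exists_connecting_eq_of_vanishesNear {c : Cohomology F (n + 1) U}
    (hA : c.VanishesNear A) (hB : c.VanishesNear B) :
    ∃ (V W : Opens X) (h : V ⊔ W ≤ U) (e : Cohomology F n (V ⊓ W)),
      A ⊆ V ∧ B ⊆ W ∧ connecting F n V W e = res h c := by
  obtain ⟨V, hV, hAV, h0⟩ := hA
  obtain ⟨W, hW, hBW, h0'⟩ := hB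
  obtain ⟨e, he⟩ := exists_connecting_eq (c := res (sup_le hV hW) c) (by rwa [res_res])
    (by rwa [res_res])
  exact ⟨V, W, sup_le hV hW, e, hAV, hBW, he⟩

lemma Cohomology.VanishesNear.union {c : Cohomology F (n + 1) U}
    (hA : c.VanishesNear A) (hB : c.VanishesNear B) (h : GermsSplit F n A B) :
    c.VanishesNear (A ∪ B) := by
  obtain ⟨V, W, hVW, e, hAV, hBW, he⟩ := exists_connecting_eq_of_vanishesNear hA hB
  exact VanishesNear.of_res (he ▸ h.vanishesNear_connecting hAV hBW e)

lemma GermsVanish.union_zero (hA : GermsVanish F 0 A) (hB : GermsVanish F 0 B) :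
    GermsVanish F 0 (A ∪ B) := fun _ hU c ↦
  (hA (Set.subset_union_left.trans hU) c).union_zero (hB (Set.subset_union_right.trans hU) c)

lemma GermsVanish.union (hA : GermsVanish F (n + 1) A) (hB : GermsVanish F (n + 1) B)
    (h : GermsSplit F n A B) : GermsVanish F (n + 1) (A ∪ B) := fun _ hU c ↦
  (hA (Set.subset_union_left.trans hU) c).union (hB (Set.subset_union_right.trans hU) c) h

lemma IsGermwiseBijective.restrict {φ : M →+ Cohomology F n U} {Z : Set X}
    (hφ : IsGermwiseBijective φ Z) (h : V ≤ U) (hZ : Z ⊆ V) :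
    IsGermwiseBijective ((res h).comp φ) Z where
  subset := hZ
  eq_zero hm := hφ.eq_zero hm.of_res
  exists_res_eq {W} hW c := by
    obtain ⟨m, W', hU, hWW', hZW', hm⟩ := hφ.exists_res_eq hW c
    refine ⟨m, V ⊓ W', inf_le_left, inf_le_right.trans hWW', Set.subset_inter hZ hZW', ?_⟩
    rw [AddMonoidHom.comp_apply, res_res, ← res_res hU inf_le_right, hm, res_res]

lemma GermsSplit.symm (h : GermsSplit F n A B) : GermsSplit F n B A := fun U V hU hV c ↦ by
  obtain ⟨V', U', hV', hU', b, a, hBV', hAU', hsum⟩ := h hV hU (res (inf_comm V U).le c)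
  refine ⟨U', V', hU', hV', a, b, hAU', hBV', ?_⟩
  have hsum' := congrArg (res (inf_comm U' V').le) hsum
  rwa [map_add, res_res, res_res, res_res, res_res, add_comm] at hsum'

lemma germsSplit_of_exists_res_eq [NormalSpace X] (hA : IsClosed A) (hB : IsClosed B)
    (h : ∀ ⦃V : Opens X⦄, A ∩ B ⊆ V → ∀ c : Cohomology F n V,
      ∃ (U : Opens X) (a : Cohomology F n U) (W : Opens X) (hU : W ≤ U) (hV : W ≤ V),
        A ⊆ U ∧ A ∩ B ⊆ W ∧ res hU a = res hV c) :
    GermsSplit F n A B := fun U V hU hV c ↦ by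
  obtain ⟨P, a, W, hWP, hW, hAP, hABW, ha⟩ := h (Set.inter_subset_inter hU hV) c
  obtain ⟨U', hU', V', hV', hAU', hBV', hle⟩ :=
    exists_opens_inf_le_of_normalSpace (U := U ⊓ P) hA hB (Set.subset_inter hU hAP) hV hABW
  refine ⟨U', V', hU'.trans inf_le_left, hV', res (hU'.trans inf_le_right) a, 0, hAU', hBV', ?_⟩
  rw [map_zero, add_zero, res_res, ← res_res hWP hle, ha, res_res]

lemma GermsVanish.germsSplit [NormalSpace X] (h : GermsVanish F n (A ∩ B)) (hA : IsClosed A)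
    (hB : IsClosed B) : GermsSplit F n A B :=
  germsSplit_of_exists_res_eq hA hB fun _ hV c ↦
    let ⟨W, hW, hZ, h0⟩ := h hV c
    ⟨⊤, 0, W, le_top, hW, Set.subset_univ A, hZ, (map_zero _).trans h0.symm⟩

lemma IsGermwiseBijective.extendByZero {φ : M →+ Cohomology F 0 V} (hφ : IsGermwiseBijective φ B)
    (hA : GermsVanish F 0 A) (hAU : A ⊆ U) (hUV : U ⊓ V = ⊥) :
    IsGermwiseBijective ((extendByZero hUV).comp φ) (A ∪ B) where
  subset := Set.union_subset_union hAU hφ.subset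
  eq_zero {m} hm := by
    have hmB := (hm.mono Set.subset_union_right).restrict le_sup_right hφ.subset
    exact hφ.eq_zero (res_right_extendByZero hUV (φ m) ▸ hmB)
  exists_res_eq {W} hW c := by
    obtain ⟨P, hPW, hAP, h0⟩ := hA (Set.subset_union_left.trans hW) c
    obtain ⟨m, Q, hQV, hQW, hBQ, hm⟩ := hφ.exists_res_eq (Set.subset_union_right.trans hW) c
    refine ⟨m, U ⊓ P ⊔ Q, sup_le_sup inf_le_left hQV, sup_le (inf_le_right.trans hPW) hQW,
      Set.union_subset_union (Set.subset_inter hAU hAP) hBQ, sub_eq_zero.1 ?_⟩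
    apply eq_zero_of_res_eq_zero
    · rw [map_sub, res_res, res_res, AddMonoidHom.comp_apply, ← res_res le_sup_left inf_le_left,
        res_left_extendByZero, ← res_res hPW inf_le_right, h0, map_zero, map_zero, sub_zero]
    · rw [map_sub, res_res, res_res, AddMonoidHom.comp_apply, ← res_res le_sup_right hQV,
        res_right_extendByZero, hm, sub_self]

lemma GermsIso.union_of_disjoint [NormalSpace X] (hvan : GermsVanish F 0 A)
    (hiso : GermsIso F 0 M B) (hA : IsClosed A) (hB : IsClosed B) (hAB : Disjoint A B) :
    GermsIso F 0 M (A ∪ B) := by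
  obtain ⟨W, φ, hφ⟩ := hiso
  obtain ⟨U, -, V, hVW, hAU, hBV, hle⟩ := exists_opens_inf_le_of_normalSpace (U := ⊤) (W := ⊥)
    hA hB (Set.subset_univ A) hφ.subset hAB.inter_eq.subset
  exact ⟨_, _, (hφ.restrict hVW hBV).extendByZero hvan hAU (le_bot_iff.1 hle)⟩

lemma IsGermwiseBijective.eq_zero_of_connecting {φ : M →+ Cohomology F n (U ⊓ V)}
    (hφ : IsGermwiseBijective φ (A ∩ B)) (hA : GermsVanish F n A) (hB : GermsVanish F n B)
    (hAU : A ⊆ U) (hBV : B ⊆ V) {m : M}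
    (hm : (connecting F n U V (φ m)).VanishesNear (A ∪ B)) : m = 0 := by
  obtain ⟨W, hW, hABW, h0⟩ := hm
  have h0' : connecting F n (U ⊓ W) (V ⊓ W)
      (res (inf_le_inf inf_le_left inf_le_left) (φ m)) = 0 := by
    rw [← res_connecting inf_le_left inf_le_left,
      ← res_res hW (sup_le inf_le_right inf_le_right), h0, map_zero]
  obtain ⟨a, b, hab⟩ := exists_res_add_res_eq h0'
  have hAW : A ⊆ ↑(U ⊓ W) := Set.subset_inter hAU (Set.subset_union_left.trans hABW)
  have hBW : B ⊆ ↑(V ⊓ W) := Set.subset_inter hBV (Set.subset_union_right.trans hABW)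
  have hsub : A ∩ B ⊆ ↑((U ⊓ W) ⊓ (V ⊓ W)) := Set.inter_subset_inter hAW hBW
  have ha := ((hA hAW a).mono Set.inter_subset_left).restrict inf_le_left hsub
  have hb := ((hB hBW b).mono Set.inter_subset_right).restrict inf_le_right hsub
  exact hφ.eq_zero (hab ▸ ha.add hb).of_res

lemma IsGermwiseBijective.exists_res_connecting_eq [NormalSpace X]
    {φ : M →+ Cohomology F n (U ⊓ V)} (hφ : IsGermwiseBijective φ (A ∩ B))
    (hA : IsClosed A) (hB : IsClosed B) (hAU : A ⊆ U) (hBV : B ⊆ V) {W : Opens X}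
    {c : Cohomology F (n + 1) W} (hcA : c.VanishesNear A) (hcB : c.VanishesNear B) :
    ∃ (m : M) (W' : Opens X) (hU : W' ≤ U ⊔ V) (hW : W' ≤ W), A ∪ B ⊆ W' ∧
      res hU (connecting F n U V (φ m)) = res hW c := by
  obtain ⟨P, Q, hPQ, e, hAP, hBQ, he⟩ := exists_connecting_eq_of_vanishesNear hcA hcB
  obtain ⟨m, N, hNUV, hNPQ, hABN, hm⟩ := hφ.exists_res_eq (Set.inter_subset_inter hAP hBQ) e
  obtain ⟨P', hP', Q', hQ', hAP', hBQ', hle⟩ := exists_opens_inf_le_of_normalSpace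
    (U := U ⊓ P) (V := V ⊓ Q) hA hB (Set.subset_inter hAU hAP) (Set.subset_inter hBV hBQ) hABN
  refine ⟨m, P' ⊔ Q', sup_le_sup (hP'.trans inf_le_left) (hQ'.trans inf_le_left),
    (sup_le_sup (hP'.trans inf_le_right) (hQ'.trans inf_le_right)).trans hPQ,
    Set.union_subset_union hAP' hBQ', ?_⟩
  rw [res_connecting (hP'.trans inf_le_left) (hQ'.trans inf_le_left), ← res_res hNUV hle, hm,
    res_res, ← res_connecting (hP'.trans inf_le_right) (hQ'.trans inf_le_right), he, res_res]

lemma GermsIso.union [NormalSpace X] (hiso : GermsIso F n M (A ∩ B)) (hA : IsClosed A)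
    (hB : IsClosed B) (hAn : GermsVanish F n A) (hBn : GermsVanish F n B)
    (hAn' : GermsVanish F (n + 1) A) (hBn' : GermsVanish F (n + 1) B) :
    GermsIso F (n + 1) M (A ∪ B) := by
  obtain ⟨W, φ, hφ⟩ := hiso
  obtain ⟨U, -, V, -, hAU, hBV, hle⟩ := exists_opens_inf_le_of_normalSpace (U := ⊤) (V := ⊤)
    hA hB (Set.subset_univ A) (Set.subset_univ B) hφ.subset
  have hφ' := hφ.restrict hle (Set.inter_subset_inter hAU hBV)
  exact ⟨U ⊔ V, (connecting F n U V).comp ((res hle).comp φ),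
    Set.union_subset_union hAU hBV, hφ'.eq_zero_of_connecting hAn hBn hAU hBV,
    fun hW c ↦ hφ'.exists_res_connecting_eq hA hB hAU hBV
      (hAn' (Set.subset_union_left.trans hW) c) (hBn' (Set.subset_union_right.trans hW) c)⟩

end Germs

section ConvexCell

variable {X E : Type*} [TopologicalSpace X] [NormedAddCommGroup E] [NormedSpace ℝ E]

/-- A closed set that `φ` maps injectively onto a convex set. Asking this of one fixed `φ`, rather
than of some embedding of `Y`, makes the notion stable under intersections. -/
structure IsConvexCell (φ : C(X, E)) (Y : Set X) : Prop where
  isClosed : IsClosed Y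
  injOn : Set.InjOn φ Y
  convex_image : Convex ℝ (φ '' Y)

namespace IsConvexCell

variable {φ : C(X, E)} {Y : Set X}

lemma isPreconnected [CompactSpace X] (hY : IsConvexCell φ Y) : IsPreconnected Y := by
  have : CompactSpace Y := isCompact_iff_compactSpace.1 hY.isClosed.isCompact
  have emb : Topology.IsClosedEmbedding (Y.domRestrict φ) :=
    (φ.continuous.comp continuous_subtype_val).isClosedEmbedding hY.injOn.injective
  rw [← Subtype.coe_image_univ Y, Topology.IsInducing.subtypeVal.isPreconnected_image,
    ← emb.isInducing.isPreconnected_image, Set.image_univ, Set.range_domRestrict]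
  exact hY.convex_image.isPreconnected

lemma inter_preimage (hY : IsConvexCell φ Y) {K : Set E} (hK : IsClosed K) (hconv : Convex ℝ K) :
    IsConvexCell φ (Y ∩ φ ⁻¹' K) where
  isClosed := hY.isClosed.inter (hK.preimage φ.continuous)
  injOn := hY.injOn.mono Set.inter_subset_left
  convex_image := by
    rw [Set.image_inter_preimage]
    exact hY.convex_image.inter hconv

lemma sInter {S : Set (Set X)} (hne : S.Nonempty) (hS : ∀ Z ∈ S, IsConvexCell φ Z)
    (hinj : Set.InjOn φ (⋃₀ S)) : IsConvexCell φ (⋂₀ S) where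
  isClosed := isClosed_sInter fun Z hZ ↦ (hS Z hZ).isClosed
  injOn := hinj.mono
    ((Set.sInter_subset_of_mem hne.some_mem).trans (Set.subset_sUnion_of_mem hne.some_mem))
  convex_image := by
    have := hne.to_subtype
    rw [Set.sInter_eq_iInter, Set.InjOn.image_iInter_eq (by rwa [← Set.sUnion_eq_iUnion])]
    exact convex_iInter fun Z ↦ (hS Z Z.2).convex_image

lemma exists_union_eq (hY : IsConvexCell φ Y) (hnt : Y.Nontrivial) :
    ∃ A B, A ⊂ Y ∧ B ⊂ Y ∧ A ∪ B = Y ∧ IsConvexCell φ A ∧ IsConvexCell φ B ∧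
      IsConvexCell φ (A ∩ B) := by
  obtain ⟨x, hx, y, hy, hxy⟩ := hnt
  obtain ⟨f, hf⟩ := geometric_hahn_banach_point_point (hY.injOn.ne hx hy hxy)
  obtain ⟨t, hxt, hty⟩ := exists_between hf
  have hle : IsConvexCell φ (Y ∩ φ ⁻¹' {v | f v ≤ t}) :=
    hY.inter_preimage (isClosed_le f.continuous continuous_const)
      (convex_halfSpace_le f.isLinear t)
  have hge {Z : Set X} (hZ : IsConvexCell φ Z) : IsConvexCell φ (Z ∩ φ ⁻¹' {v | t ≤ f v}) :=
    hZ.inter_preimage (isClosed_le continuous_const f.continuous)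
      (convex_halfSpace_ge f.isLinear t)
  refine ⟨_, _, ⟨Set.inter_subset_left, fun h ↦ hty.not_ge (h hy).2⟩,
    ⟨Set.inter_subset_left, fun h ↦ hxt.not_ge (h hx).2⟩, ?_, hle, hge hY, ?_⟩
  · rw [← Set.inter_union_distrib_left, Set.inter_eq_left]
    exact fun z _ ↦ le_total (f (φ z)) t
  · convert! hge hle using 1
    rw [← Set.inter_inter_distrib_left, Set.inter_assoc]

end IsConvexCell

end ConvexCell

section ConvexCellVanishing

open Cohomology

variable {R : Type u} [Ring R] {X : TopCat.{u}} [HasExt.{w} (ModuleSheaf R X)]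
  {F : ModuleSheaf R X} {n : ℕ} {E : Type*} [NormedAddCommGroup E] [NormedSpace ℝ E]
  {φ : C(X, E)} {Y : Set X}

lemma Cohomology.exists_minimal_isConvexCell_not_vanishesNear [CompactSpace X]
    (hY : IsConvexCell φ Y) {U : Opens X} {c : Cohomology F n U} (hc : ¬ c.VanishesNear Y) :
    ∃ Z ⊆ Y, Minimal (fun Z ↦ IsConvexCell φ Z ∧ Z ⊆ Y ∧ ¬ c.VanishesNear Z) Z := by
  refine zorn_superset_nonempty {Z | IsConvexCell φ Z ∧ Z ⊆ Y ∧ ¬ c.VanishesNear Z}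
    (fun S hS hchain hne ↦ ⟨⋂₀ S, ⟨?_, ?_, ?_⟩, fun Z hZ ↦ Set.sInter_subset_of_mem hZ⟩)
    Y ⟨hY, subset_rfl, hc⟩
  · exact .sInter hne (fun Z hZ ↦ (hS hZ).1)
      (hY.injOn.mono (Set.sUnion_subset fun Z hZ ↦ (hS hZ).2.1))
  · exact (Set.sInter_subset_of_mem hne.some_mem).trans (hS hne.some_mem).2.1
  · rintro ⟨V, hV, hSV, h0⟩
    obtain ⟨Z, hZ, hZV⟩ := exists_mem_subset_of_sInter_subset hchain hne
      (fun Z hZ ↦ (hS hZ).1.isClosed) hSV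
    exact (hS hZ).2.2 ⟨V, hV, hZV, h0⟩

lemma IsConvexCell.germsVanish_succ_of_germsSplit [CompactSpace X]
    (hsplit : ∀ A B, IsClosed A → IsClosed B → IsConvexCell φ (A ∩ B) → GermsSplit F n A B)
    (hY : IsConvexCell φ Y) : GermsVanish F (n + 1) Y := by
  intro U hU c
  by_contra hc
  obtain ⟨Z, hZY, ⟨hZ, -, hcZ⟩, hmin⟩ := exists_minimal_isConvexCell_not_vanishesNear hY hc
  refine hcZ ?_
  rcases Z.subsingleton_or_nontrivial with hsub | hnt
  · rcases hsub.eq_empty_or_singleton with rfl | ⟨x, rfl⟩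
    · exact germsVanish_empty (Set.empty_subset _) c
    · exact germsVanish_succ_singleton x (hZY.trans hU) c
  · obtain ⟨A, B, hAZ, hBZ, rfl, hA, hB, hAB⟩ := hZ.exists_union_eq hnt
    have vanishes {Z'} (hZ' : IsConvexCell φ Z') (h : Z' ⊂ A ∪ B) : c.VanishesNear Z' := by
      by_contra hcon
      exact h.2 (hmin ⟨hZ', h.1.trans hZY, hcon⟩ h.1)
    exact (vanishes hA hAZ).union (vanishes hB hBZ) (hsplit A B hA.isClosed hB.isClosed hAB)

lemma IsConvexCell.germsVanish_succ [CompactSpace X] [T2Space X]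
    (hsplit : ∀ A B, IsClosed A → IsClosed B → IsPreconnected (A ∩ B) → GermsSplit F 0 A B)
    (hY : IsConvexCell φ Y) (n : ℕ) : GermsVanish F (n + 1) Y := by
  induction n generalizing Y with
  | zero =>
    exact germsVanish_succ_of_germsSplit
      (fun A B hA hB hAB ↦ hsplit A B hA hB hAB.isPreconnected) hY
  | succ n ih =>
    exact germsVanish_succ_of_germsSplit
      (fun A B hA hB hAB ↦ (ih hAB).germsSplit hA hB) hY

end ConvexCellVanishing

section Sections

open Opposite

variable {R : Type u} [Ring R] {X : TopCat.{u}} {F : ModuleSheaf R X} {U V : Opens X}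

lemma map_homOfLE_map_homOfLE {W : Opens X} (h : V ≤ U) (h' : W ≤ V) (s : F.obj.obj (op U)) :
    F.obj.map (homOfLE h').op (F.obj.map (homOfLE h).op s) =
      F.obj.map (homOfLE (h'.trans h)).op s := by
  rw [← ConcreteCategory.comp_apply, ← Functor.map_comp]
  rfl

lemma exists_map_eq_zero_of_germ_eq_zero {x : X} (hx : x ∈ U) {s : F.obj.obj (op U)}
    (h : TopCat.Presheaf.germ F.obj U x hx s = 0) :
    ∃ (V : Opens X) (h : V ≤ U), x ∈ V ∧ F.obj.map (homOfLE h).op s = 0 := by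
  obtain ⟨V, hxV, i, _, hst⟩ := TopCat.Presheaf.germ_eq F.obj x hx hx s 0
    (h.trans (map_zero (ModuleCat.Hom.hom _)).symm)
  exact ⟨V, leOfHom i, hxV, hst.trans (map_zero (ModuleCat.Hom.hom _))⟩

lemma section_eq_of_locally_eq {s t : F.obj.obj (op U)}
    (h : ∀ x ∈ U, ∃ (V : Opens X) (h : V ≤ U), x ∈ V ∧
      F.obj.map (homOfLE h).op s = F.obj.map (homOfLE h).op t) : s = t := by
  refine TopCat.Presheaf.section_ext F U s t fun x hx ↦ ?_
  obtain ⟨V, hV, hxV, hst⟩ := h x hx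
  exact TopCat.Presheaf.germ_ext F.obj V hxV (homOfLE hV) (homOfLE hV) hst

variable (F) in
/-- The skyscraper sheaf at `x` with value the stalk of `F`, that is `i_* i^* F`. -/
abbrev germSkyscraper (x : X) : ModuleSheaf R X :=
  (skyscraperSheafFunctor x).obj (TopCat.Presheaf.stalk F.obj x)

variable (F) in
/-- The unit `F ⟶ i_* i^* F` for the inclusion `i` of the point `x`. -/
abbrev germUnit (x : X) : F ⟶ germSkyscraper F x :=
  (stalkSkyscraperSheafAdjunction x).unit.app F

lemma germUnit_app_eq_zero {x : X} (hx : x ∉ U) (s : F.obj.obj (op U)) :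
    (germUnit F x).hom.app (op U) s = 0 := by
  have isZero : IsZero ((germSkyscraper F x).obj.obj (op U)) := by
    rw [show (germSkyscraper F x).obj.obj (op U) = ⊤_ ModuleCat R from if_neg hx]
    exact (isZero_zero _).of_iso HasZeroObject.zeroIsoTerminal.symm
  exact (ModuleCat.subsingleton_of_isZero isZero).elim _ _

lemma germ_eq_zero_of_germUnit_app_eq_zero {x : X} (hx : x ∈ U) {s : F.obj.obj (op U)}
    (hs : (germUnit F x).hom.app (op U) s = 0) :
    TopCat.Presheaf.germ F.obj U x hx s = 0 := by
  have factor := StalkSkyscraperPresheafAdjunctionAuxs.germ_fromStalk x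
    (StalkSkyscraperPresheafAdjunctionAuxs.toSkyscraperPresheaf x
      (𝟙 (TopCat.Presheaf.stalk F.obj x))) U hx
  rw [StalkSkyscraperPresheafAdjunctionAuxs.fromStalk_to_skyscraper, Category.comp_id] at factor
  refine (ConcreteCategory.congr_hom factor s).trans ((ConcreteCategory.comp_apply _ _ s).trans ?_)
  exact (congrArg _ hs).trans (map_zero (ModuleCat.Hom.hom _))

end Sections

section ConstantSheaf

open Opposite

variable {R : Type u} [Ring R] {X : TopCat.{u}} (M : ModuleCat.{u} R)

variable (X) in
/-- The constant sheaf on `X` with value `M`. -/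
abbrev constSheaf : ModuleSheaf R X :=
  (constantSheaf (Opens.grothendieckTopology X) (ModuleCat.{u} R)).obj M

variable (R X) in
/-- The constant sheaf represents global sections: `Ext` out of it is the cohomology of `X`. -/
def freeSheafTopIso : (freeSheaf R X).obj ⊤ ≅ constSheaf X (ModuleCat.of R R) :=
  (presheafToSheaf (Opens.grothendieckTopology X) (ModuleCat.{u} R)).mapIso <|
    NatIso.ofComponents (F := yoneda.obj (⊤ : Opens X) ⋙ ModuleCat.free R)
      (G := (Functor.const (Opens X)ᵒᵖ).obj (ModuleCat.of R R))
      (fun W ↦ (Finsupp.uniqueLinearEquiv R R (homOfLE le_top : W.unop ⟶ ⊤)).toModuleIso)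
      fun {_ W} _ ↦ ModuleCat.free_hom_ext fun i ↦
        (congrArg (Finsupp.uniqueLinearEquiv R R (homOfLE le_top : W.unop ⟶ ⊤))
          (ModuleCat.free_map_apply _ i)).trans
            ((Finsupp.single_eq_same (M := R)).trans (Finsupp.single_eq_same (M := R)).symm)

variable {M} {U V : Opens X}

variable (M U) in
/-- The section of the constant sheaf over `U` with constant value `m`. -/
def constSection : M →+ (constSheaf X M).obj.obj (op U) :=
  ((toSheafify (Opens.grothendieckTopology X)
    ((Functor.const (Opens X)ᵒᵖ).obj M)).app (op U)).hom.toAddMonoidHom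

lemma map_constSection (h : V ≤ U) (m : M) :
    (constSheaf X M).obj.map (homOfLE h).op (constSection M U m) = constSection M V m :=
  (ConcreteCategory.congr_hom ((toSheafify (Opens.grothendieckTopology X)
    ((Functor.const (Opens X)ᵒᵖ).obj M)).naturality (homOfLE h).op) m).symm

lemma constSection_injective {x : X} (hx : x ∈ U) :
    Function.Injective (constSection M U) := fun m m' h ↦
  let ⟨_, _, hm, _⟩ := Presheaf.equalizerSieve_mem (Opens.grothendieckTopology X)
    (toSheafify (Opens.grothendieckTopology X) ((Functor.const (Opens X)ᵒᵖ).obj M))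
    (X := op U) m m' h x hx
  hm

lemma exists_map_eq_constSection (s : (constSheaf X M).obj.obj (op U)) {x : X} (hx : x ∈ U) :
    ∃ (m : M) (V : Opens X) (h : V ≤ U), x ∈ V ∧
      (constSheaf X M).obj.map (homOfLE h).op s = constSection M V m := by
  obtain ⟨V, i, ⟨m, hm⟩, hxV⟩ := Presheaf.imageSieve_mem (Opens.grothendieckTopology X)
    (toSheafify (Opens.grothendieckTopology X) ((Functor.const (Opens X)ᵒᵖ).obj M)) (U := op U)
    s x hx
  exact ⟨m, V, leOfHom i, hxV, hm.symm⟩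

lemma exists_isLocallyConstant (s : (constSheaf X M).obj.obj (op U)) :
    ∃ f : U → M, IsLocallyConstant f ∧ ∀ (V : Opens X) (h : V ≤ U) (m : M),
      (∀ y : V, f ⟨y, h y.2⟩ = m) →
        (constSheaf X M).obj.map (homOfLE h).op s = constSection M V m := by
  choose f V hV hmem hs using fun x : U ↦ exists_map_eq_constSection s x.2
  have f_eq (x y : U) (hy : (y : X) ∈ V x) : f y = f x := by
    refine constSection_injective (U := V y ⊓ V x) ⟨hmem y, hy⟩ ?_
    rw [← map_constSection inf_le_left, ← map_constSection inf_le_right, ← hs, ← hs,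
      map_homOfLE_map_homOfLE, map_homOfLE_map_homOfLE]
  refine ⟨f, (IsLocallyConstant.iff_exists_open f).2 fun x ↦ ⟨Subtype.val ⁻¹' (V x),
    (V x).isOpen.preimage continuous_subtype_val, hmem x, fun y ↦ f_eq x y⟩, fun W hW m hf ↦ ?_⟩
  refine section_eq_of_locally_eq fun x hx ↦ ⟨W ⊓ V ⟨x, hW hx⟩, inf_le_left, ⟨hx, hmem _⟩, ?_⟩
  rw [map_constSection, ← hf ⟨x, hx⟩, ← map_constSection inf_le_right, ← hs,
    map_homOfLE_map_homOfLE, map_homOfLE_map_homOfLE]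

lemma exists_map_eq_constSection_of_isPreconnected {Z : Set X} (hZ : IsPreconnected Z) (hZU : Z ⊆ U)
    (s : (constSheaf X M).obj.obj (op U)) :
    ∃ (m : M) (V : Opens X) (h : V ≤ U), Z ⊆ V ∧
      (constSheaf X M).obj.map (homOfLE h).op s = constSection M V m := by
  obtain ⟨f, hf, hs⟩ := exists_isLocallyConstant s
  obtain ⟨m, hm⟩ : ∃ m, ∀ x (hx : x ∈ Z), f ⟨x, hZU hx⟩ = m := by
    obtain rfl | ⟨x, hx⟩ := Z.eq_empty_or_nonempty
    · exact ⟨0, fun _ h ↦ h.elim⟩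
    have image : Subtype.val '' (Subtype.val ⁻¹' Z : Set U) = Z :=
      Set.image_preimage_eq_of_subset fun x hx ↦ ⟨⟨x, hZU hx⟩, rfl⟩
    have hZ' : IsPreconnected (Subtype.val ⁻¹' Z : Set U) :=
      Topology.IsInducing.subtypeVal.isPreconnected_image.1 (image.symm ▸ hZ)
    exact ⟨f ⟨x, hZU hx⟩, fun y hy ↦ hf.apply_eq_of_isPreconnected hZ' hy hx⟩
  let V : Opens X := ⟨Subtype.val '' (f ⁻¹' {m}),
    U.isOpen.isOpenMap_subtype_val _ (hf.isOpen_fiber m)⟩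
  have hV : V ≤ U := Subtype.coe_image_subset _ _
  refine ⟨m, V, hV, fun x hx ↦ ⟨⟨x, hZU hx⟩, hm x hx, rfl⟩, hs V hV m ?_⟩
  rintro ⟨-, y, hy, rfl⟩
  exact hy

end ConstantSheaf

section GermKernel

open Opposite Cohomology

variable {R : Type u} [Ring R] {X : TopCat.{u}} {F : ModuleSheaf R X} {x : X} {U V : Opens X}

variable (F x) in
/-- The kernel of `F ⟶ i_* i^* F`, for the inclusion `i` of the point `x`. -/
def germKernel : ModuleSheaf R X := kernel (germUnit F x)

variable [HasExt.{w} (ModuleSheaf R X)]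

variable (F x U) in
/-- Degree-zero cohomology of `germKernel F x`, read as sections of `F`. -/
def germKernelSections : Cohomology (germKernel F x) 0 U →+ F.obj.obj (op U) :=
  (((kernel.ι (germUnit F x)).hom.app (op U)).hom.toAddMonoidHom).comp
    (sectionsEquiv (germKernel F x) U).toAddMonoidHom

lemma germKernelSections_res (h : V ≤ U) (c : Cohomology (germKernel F x) 0 U) :
    germKernelSections F x V (res h c) = F.obj.map (homOfLE h).op (germKernelSections F x U c) :=
  (congrArg _ (sectionsEquiv_res h c)).trans (ConcreteCategory.congr_hom
    ((kernel.ι (germUnit F x)).hom.naturality (homOfLE h).op) _)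

lemma germKernelSections_injective : Function.Injective (germKernelSections F x U) := by
  have mono_ι : Mono (((sheafToPresheaf _ _).map (kernel.ι (germUnit F x))).app (op U)) :=
    inferInstance
  exact ((ModuleCat.mono_iff_injective _).1 mono_ι).comp
    (sectionsEquiv (germKernel F x) U).injective

lemma exists_germKernelSections_eq (hx : x ∉ U) (s : F.obj.obj (op U)) :
    ∃ c, germKernelSections F x U c = s := by
  obtain ⟨f, rfl⟩ := (freeSheafHomEquiv F U).surjective s
  have condition : f ≫ germUnit F x = 0 := (freeSheafHomEquiv (germSkyscraper F x) U).injective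
    ((freeSheafHomEquiv_comp f _).trans
      ((germUnit_app_eq_zero hx _).trans (map_zero (freeSheafHomEquiv _ U)).symm))
  refine ⟨(sectionsEquiv _ U).symm (freeSheafHomEquiv _ U (kernel.lift _ f condition)), ?_⟩
  refine (congrArg _ ((sectionsEquiv _ U).apply_symm_apply _)).trans ?_
  exact (freeSheafHomEquiv_comp _ _).symm.trans (congrArg _ (kernel.lift_ι _ _ _))

lemma germ_germKernelSections (hx : x ∈ U) (c : Cohomology (germKernel F x) 0 U) :
    TopCat.Presheaf.germ F.obj U x hx (germKernelSections F x U c) = 0 :=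
  germ_eq_zero_of_germUnit_app_eq_zero hx <| ConcreteCategory.congr_hom
    (congr_app ((sheafToPresheaf _ _).congr_map (kernel.condition (germUnit F x))) (op U)) _

variable {M : ModuleCat.{u} R}

variable (M) in
lemma exists_germKernelSections_eq_constSection (hx : x ∉ U) :
    ∃ φ : M →+ Cohomology (germKernel (constSheaf X M) x) 0 U,
      ∀ m, germKernelSections (constSheaf X M) x U (φ m) = constSection M U m := by
  let e := AddEquiv.ofBijective (germKernelSections (constSheaf X M) x U)
    ⟨germKernelSections_injective, exists_germKernelSections_eq hx⟩
  exact ⟨e.symm.toAddMonoidHom.comp (constSection M U), fun m ↦ e.apply_symm_apply _⟩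

lemma germsVanish_zero_germKernel_constSheaf {Z : Set X} (hZ : IsPreconnected Z) (hx : x ∈ Z) :
    GermsVanish (germKernel (constSheaf X M) x) 0 Z := fun U hU c ↦ by
  obtain ⟨m, V, hV, hZV, hm⟩ := exists_map_eq_constSection_of_isPreconnected hZ hU
    (germKernelSections (constSheaf X M) x U c)
  rw [← germKernelSections_res] at hm
  obtain ⟨W, hW, hxW, h0⟩ := exists_map_eq_zero_of_germ_eq_zero (hZV hx)
    (germ_germKernelSections (hZV hx) (res hV c))
  have m_eq_zero : m = 0 := by
    rw [hm, map_constSection] at h0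
    exact constSection_injective hxW (h0.trans (map_zero _).symm)
  exact ⟨V, hV, hZV, germKernelSections_injective (by rw [hm, m_eq_zero, map_zero, map_zero])⟩

variable (M) in
lemma exists_isGermwiseBijective_germKernel_constSheaf {Z : Set X} (hZ : IsPreconnected Z)
    (hne : Z.Nonempty) (hZU : Z ⊆ U) (hx : x ∉ U) :
    ∃ φ : M →+ Cohomology (germKernel (constSheaf X M) x) 0 U, IsGermwiseBijective φ Z := by
  obtain ⟨φ, hφ⟩ := exists_germKernelSections_eq_constSection M hx
  have hφ_res {V : Opens X} (h : V ≤ U) (m : M) :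
      germKernelSections (constSheaf X M) x V (res h (φ m)) = constSection M V m := by
    rw [germKernelSections_res, hφ, map_constSection]
  refine ⟨φ, hZU, fun {m} ⟨V, hV, hZV, h0⟩ ↦ ?_, fun {V} hV c ↦ ?_⟩
  · obtain ⟨z, hz⟩ := hne
    refine constSection_injective (hZV hz) ?_
    rw [← hφ_res hV, h0, map_zero, map_zero]
  · obtain ⟨m, W, hWV, hZW, hm⟩ := exists_map_eq_constSection_of_isPreconnected hZ hV
      (germKernelSections (constSheaf X M) x V c)
    refine ⟨m, U ⊓ W, inf_le_left, inf_le_right.trans hWV, Set.subset_inter hZU hZW,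
      germKernelSections_injective ?_⟩
    rw [hφ_res, ← res_res hWV inf_le_right, germKernelSections_res, germKernelSections_res, hm,
      map_constSection]

lemma germsIso_zero_germKernel_constSheaf [T1Space X] {Z : Set X} (hZ : IsPreconnected Z)
    (hne : Z.Nonempty) (hx : x ∉ Z) : GermsIso (germKernel (constSheaf X M) x) 0 M Z :=
  ⟨⟨{x}ᶜ, isOpen_compl_singleton⟩, exists_isGermwiseBijective_germKernel_constSheaf M hZ hne
    (Set.subset_compl_singleton_iff.2 hx) fun h ↦ h rfl⟩

lemma germsSplit_germKernel_constSheaf_of_notMem [T1Space X] [NormalSpace X] {A B : Set X}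
    (hA : IsClosed A) (hB : IsClosed B) (hAB : IsPreconnected (A ∩ B)) (hne : (A ∩ B).Nonempty)
    (hx : x ∉ A) : GermsSplit (germKernel (constSheaf X M) x) 0 A B := by
  let U : Opens X := ⟨{x}ᶜ, isOpen_compl_singleton⟩
  have hAU : A ⊆ U := Set.subset_compl_singleton_iff.2 hx
  obtain ⟨φ, hφ⟩ := exists_isGermwiseBijective_germKernel_constSheaf M hAB hne
    (Set.inter_subset_left.trans hAU) (x := x) fun h ↦ h rfl
  refine germsSplit_of_exists_res_eq hA hB fun V hV c ↦ ?_
  obtain ⟨m, W, hWU, hWV, hW, hm⟩ := hφ.exists_res_eq hV c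
  exact ⟨U, φ m, W, hWU, hWV, hAU, hW, hm⟩

lemma germsSplit_germKernel_constSheaf [T1Space X] [NormalSpace X] {A B : Set X}
    (hA : IsClosed A) (hB : IsClosed B) (hAB : IsPreconnected (A ∩ B)) :
    GermsSplit (germKernel (constSheaf X M) x) 0 A B := by
  obtain hempty | hne := (A ∩ B).eq_empty_or_nonempty
  · exact GermsVanish.germsSplit (hempty ▸ germsVanish_empty) hA hB
  by_cases hxA : x ∈ A
  · by_cases hxB : x ∈ B
    · exact (germsVanish_zero_germKernel_constSheaf hAB ⟨hxA, hxB⟩).germsSplit hA hB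
    · rw [Set.inter_comm] at hAB hne
      exact (germsSplit_germKernel_constSheaf_of_notMem hB hA hAB hne hxB).symm
  · exact germsSplit_germKernel_constSheaf_of_notMem hA hB hAB hne hxA

end GermKernel

section Hemisphere

open RealInnerProductSpace

variable {E : Type*} [NormedAddCommGroup E] [InnerProductSpace ℝ E] {W : Submodule ℝ E} {v w : E}

variable (W v) in
/-- The closed hemisphere around `v` of the unit sphere of `W`. -/
def hemisphere : Set E := {w | ‖w‖ = 1 ∧ w ∈ W ∧ 0 ≤ ⟪v, w⟫}

variable (v) in
/-- For a unit vector `v`, the orthogonal projection onto the hyperplane `vᗮ`. -/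
def equatorialPart : C(E, E) where
  toFun w := w - ⟪v, w⟫ • v

lemma isClosed_hemisphere [FiniteDimensional ℝ W] : IsClosed (hemisphere W v) :=
  (isClosed_eq continuous_norm continuous_const).inter (W.closed_of_finiteDimensional.inter
    (isClosed_le continuous_const (g := fun w ↦ ⟪v, w⟫) (by fun_prop)))

lemma norm_equatorialPart_sq (hv : ‖v‖ = 1) (hw : ‖w‖ = 1) :
    ‖equatorialPart v w‖ ^ 2 = 1 - ⟪v, w⟫ ^ 2 := by
  rw [equatorialPart, ContinuousMap.coe_mk, norm_sub_sq_real, norm_smul, inner_smul_right,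
    real_inner_comm, hv, hw, Real.norm_eq_abs, mul_pow, sq_abs]
  ring

lemma inner_equatorialPart (hv : ‖v‖ = 1) : ⟪v, equatorialPart v w⟫ = 0 := by
  rw [equatorialPart, ContinuousMap.coe_mk, inner_sub_right, inner_smul_right,
    real_inner_self_eq_norm_sq, hv]
  ring

lemma injOn_equatorialPart_hemisphere (hv : ‖v‖ = 1) :
    Set.InjOn (equatorialPart v) (hemisphere W v) := by
  rintro w ⟨hw, -, hvw⟩ z ⟨hz, -, hvz⟩ h
  have height_eq : ⟪v, w⟫ = ⟪v, z⟫ := by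
    have := norm_equatorialPart_sq hv hw
    rw [h, norm_equatorialPart_sq hv hz] at this
    exact (pow_left_inj₀ hvw hvz two_ne_zero).1 (by linarith)
  simpa [equatorialPart, height_eq] using h

lemma image_equatorialPart_hemisphere (hv : ‖v‖ = 1) (hvW : v ∈ W) :
    equatorialPart v '' hemisphere W v =
      ((W ⊓ (ℝ ∙ v)ᗮ : Submodule ℝ E) : Set E) ∩ Metric.closedBall 0 1 := by
  ext p
  constructor
  · rintro ⟨w, ⟨hw, hwW, -⟩, rfl⟩
    refine ⟨⟨W.sub_mem hwW (W.smul_mem _ hvW), Submodule.mem_orthogonal_singleton_iff_inner_right.2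
      (inner_equatorialPart hv)⟩, ?_⟩
    rw [mem_closedBall_zero_iff, ← sq_le_one_iff₀ (norm_nonneg _), norm_equatorialPart_sq hv hw]
    linarith [sq_nonneg ⟪v, w⟫]
  · rintro ⟨⟨hpW, hpv⟩, hp⟩
    replace hpv : ⟪v, p⟫ = 0 := Submodule.mem_orthogonal_singleton_iff_inner_right.1 hpv
    rw [mem_closedBall_zero_iff, ← sq_le_one_iff₀ (norm_nonneg _)] at hp
    set height := √(1 - ‖p‖ ^ 2)
    have inner_eq : ⟪v, p + height • v⟫ = height := by
      rw [inner_add_right, inner_smul_right, real_inner_self_eq_norm_sq, hpv, hv]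
      ring
    refine ⟨p + height • v, ⟨?_, W.add_mem hpW (W.smul_mem _ hvW), ?_⟩, ?_⟩
    · rw [← sq_eq_sq₀ (norm_nonneg _) zero_le_one, norm_add_sq_real, inner_smul_right,
        real_inner_comm, hpv, norm_smul, hv, mul_one, Real.norm_eq_abs, sq_abs,
        Real.sq_sqrt (by linarith)]
      ring
    · exact (Real.sqrt_nonneg _).trans_eq inner_eq.symm
    · rw [equatorialPart, ContinuousMap.coe_mk, inner_eq, add_sub_cancel_right]

end Hemisphere

section GreatSphere

open RealInnerProductSpace

variable {X E : Type*} [TopologicalSpace X] [NormedAddCommGroup E]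
  (e : X ≃ₜ Metric.sphere (0 : E) 1) {v : E} {x : X}

/-- The embedding of `X` in `E` as the unit sphere. -/
def sphereInclusion : C(X, E) := ⟨fun x ↦ e x, by fun_prop⟩

variable (x) in
lemma norm_sphereInclusion : ‖sphereInclusion e x‖ = 1 := mem_sphere_zero_iff_norm.1 (e x).2

lemma sphereInclusion_injective : Function.Injective (sphereInclusion e) :=
  Subtype.val_injective.comp e.injective

lemma exists_sphereInclusion_eq {w : E} (hw : ‖w‖ = 1) : ∃ x, sphereInclusion e x = w :=
  ⟨e.symm ⟨w, mem_sphere_zero_iff_norm.2 hw⟩, congrArg Subtype.val (e.apply_symm_apply _)⟩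

variable [InnerProductSpace ℝ E] (W : Submodule ℝ E)

/-- The subset of `X` corresponding to the unit sphere of the subspace `W`. -/
def greatSphere : Set X := {x | sphereInclusion e x ∈ W}

lemma isConvexCell_preimage_hemisphere [FiniteDimensional ℝ W] (hv : ‖v‖ = 1) (hvW : v ∈ W) :
    IsConvexCell ((equatorialPart v).comp (sphereInclusion e))
      (sphereInclusion e ⁻¹' hemisphere W v) where
  isClosed := isClosed_hemisphere.preimage (sphereInclusion e).continuous
  injOn := (injOn_equatorialPart_hemisphere hv).comp (sphereInclusion_injective e).injOn
    fun _ hx ↦ hx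
  convex_image := by
    rw [ContinuousMap.coe_comp, Set.image_comp, Set.image_preimage_eq_of_subset
      fun w hw ↦ exists_sphereInclusion_eq e hw.1, image_equatorialPart_hemisphere hv hvW]
    exact (Submodule.convex _).inter (convex_closedBall 0 1)

lemma preimage_hemisphere_union_neg :
    sphereInclusion e ⁻¹' hemisphere W v ∪ sphereInclusion e ⁻¹' hemisphere W (-v) =
      greatSphere e W := by
  ext x
  have := le_total 0 ⟪v, sphereInclusion e x⟫
  simp only [greatSphere, hemisphere, Set.mem_union, Set.mem_preimage, Set.mem_ofPred_eq,
    norm_sphereInclusion, inner_neg_left, neg_nonneg]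
  tauto

lemma preimage_hemisphere_inter_neg :
    sphereInclusion e ⁻¹' hemisphere W v ∩ sphereInclusion e ⁻¹' hemisphere W (-v) =
      greatSphere e (W ⊓ (ℝ ∙ v)ᗮ) := by
  ext x
  have : 0 ≤ ⟪v, sphereInclusion e x⟫ ∧ ⟪v, sphereInclusion e x⟫ ≤ 0 ↔
      ⟪v, sphereInclusion e x⟫ = 0 := and_comm.trans le_antisymm_iff.symm
  simp only [greatSphere, hemisphere, Set.mem_inter_iff, Set.mem_preimage, Set.mem_ofPred_eq,
    norm_sphereInclusion, inner_neg_left, neg_nonneg, Submodule.mem_inf,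
    Submodule.mem_orthogonal_singleton_iff_inner_right, ← this]
  tauto

variable {W}

lemma exists_greatSphere_eq_pair (hx : x ∈ greatSphere e W) (hW : Module.finrank ℝ W = 1) :
    ∃ y ≠ x, greatSphere e W = {x, y} := by
  have hx1 := norm_sphereInclusion e x
  obtain ⟨y, hy⟩ := exists_sphereInclusion_eq e ((norm_neg _).trans hx1)
  refine ⟨y, ?_, Set.ext fun z ↦ ⟨fun hz ↦ ?_, ?_⟩⟩
  · rintro rfl
    exact ne_neg_of_mem_unit_sphere ℝ (e y) (Subtype.ext hy)
  · obtain ⟨c, hc⟩ := (finrank_eq_one_iff_of_nonzero' (⟨_, hx⟩ : W)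
      fun h ↦ by simpa [hx1] using congrArg (fun w : W ↦ ‖(w : E)‖) h).1 hW ⟨_, hz⟩
    replace hc : c • sphereInclusion e x = sphereInclusion e z := congrArg Subtype.val hc
    have habs : |c| = 1 := by
      simpa [norm_smul, norm_sphereInclusion] using congrArg norm hc
    rcases eq_or_eq_neg_of_abs_eq habs with rfl | rfl
    · exact .inl (sphereInclusion_injective e (hc.symm.trans (one_smul ℝ _)))
    · exact .inr (sphereInclusion_injective e (by rw [← hc, hy, neg_one_smul]))
  · rintro (rfl | rfl)
    exacts [hx, (congrArg (· ∈ W) hy).mpr (W.neg_mem hx)]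

lemma exists_norm_eq_one_inner_sphereInclusion_eq_zero [FiniteDimensional ℝ W]
    (hx : x ∈ greatSphere e W) (hW : 1 < Module.finrank ℝ W) :
    ∃ v ∈ W, ‖v‖ = 1 ∧ ⟪v, sphereInclusion e x⟫ = 0 := by
  have finrank_add := Submodule.finrank_add_inf_finrank_orthogonal
    ((Submodule.span_singleton_le_iff_mem _ W).2 hx)
  rw [finrank_span_singleton (norm_ne_zero_iff.1 ((norm_sphereInclusion e x).trans_ne one_ne_zero))]
    at finrank_add
  obtain ⟨w, ⟨hwx, hwW⟩, hw⟩ := Submodule.exists_mem_ne_zero_of_ne_bot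
    (p := (ℝ ∙ sphereInclusion e x)ᗮ ⊓ W) (Submodule.one_le_finrank_iff.1 (by omega))
  refine ⟨‖w‖⁻¹ • w, W.smul_mem _ hwW, norm_smul_inv_norm hw, ?_⟩
  rw [inner_smul_left, Submodule.mem_orthogonal_singleton_iff_inner_left.1 hwx, mul_zero]

lemma finrank_inf_orthogonal_span_singleton [FiniteDimensional ℝ W] {k : ℕ} (hv : ‖v‖ = 1)
    (hvW : v ∈ W) (hW : Module.finrank ℝ W = k + 1) :
    Module.finrank ℝ (W ⊓ (ℝ ∙ v)ᗮ : Submodule ℝ E) = k := by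
  have finrank_add := Submodule.finrank_add_inf_finrank_orthogonal
    ((Submodule.span_singleton_le_iff_mem _ W).2 hvW)
  rw [finrank_span_singleton (norm_ne_zero_iff.1 (hv.trans_ne one_ne_zero)), inf_comm]
    at finrank_add
  omega

end GreatSphere

section SphereCohomology

open RealInnerProductSpace

variable {R : Type u} [Ring R] {X : TopCat.{u}} [HasExt.{w} (ModuleSheaf R X)]
  {E : Type*} [NormedAddCommGroup E] [InnerProductSpace ℝ E] {W : Submodule ℝ E} {v : E} {x : X}
  {M : ModuleCat.{u} R} [CompactSpace X] [T2Space X]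

lemma germsVanish_germKernel_constSheaf_preimage_hemisphere [FiniteDimensional ℝ W]
    (e : X ≃ₜ Metric.sphere (0 : E) 1) (hx : x ∈ greatSphere e W) (hv : ‖v‖ = 1) (hvW : v ∈ W)
    (hxv : ⟪v, sphereInclusion e x⟫ = 0) :
    ∀ n, GermsVanish (germKernel (constSheaf X M) x) n (sphereInclusion e ⁻¹' hemisphere W v)
  | 0 => germsVanish_zero_germKernel_constSheaf
      (isConvexCell_preimage_hemisphere e W hv hvW).isPreconnected
      ⟨norm_sphereInclusion e x, hx, hxv.ge⟩
  | n + 1 => (isConvexCell_preimage_hemisphere e W hv hvW).germsVanish_succ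
      (fun _ _ ↦ germsSplit_germKernel_constSheaf) n

lemma germsIso_germKernel_constSheaf_pair {y : X} (hy : y ≠ x) :
    GermsIso (germKernel (constSheaf X M) x) 0 M {x, y} :=
  GermsIso.union_of_disjoint
    (germsVanish_zero_germKernel_constSheaf isPreconnected_singleton rfl)
    (germsIso_zero_germKernel_constSheaf isPreconnected_singleton (Set.singleton_nonempty y)
      hy.symm)
    isClosed_singleton isClosed_singleton (Set.disjoint_singleton.2 hy.symm)

lemma germsVanish_succ_pair {F : ModuleSheaf R X} {y : X} (hy : y ≠ x) (n : ℕ) :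
    GermsVanish F (n + 1) {x, y} :=
  (germsVanish_succ_singleton x).union (germsVanish_succ_singleton y) <|
    GermsVanish.germsSplit
      ((Set.disjoint_singleton.2 hy.symm).inter_eq ▸ germsVanish_empty)
      isClosed_singleton isClosed_singleton

lemma germs_germKernel_constSheaf_greatSphere (e : X ≃ₜ Metric.sphere (0 : E) 1) {k : ℕ}
    (hW : Module.finrank ℝ W = k + 1) (hx : x ∈ greatSphere e W) :
    GermsIso (germKernel (constSheaf X M) x) k M (greatSphere e W) ∧
      ∀ n ≠ k, GermsVanish (germKernel (constSheaf X M) x) n (greatSphere e W) := by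
  have := Module.finite_of_finrank_eq_succ hW
  induction k generalizing W with
  | zero =>
    obtain ⟨y, hyx, hpair⟩ := exists_greatSphere_eq_pair e hx hW
    rw [hpair]
    refine ⟨germsIso_germKernel_constSheaf_pair hyx, fun n hn ↦ ?_⟩
    obtain ⟨n, rfl⟩ := Nat.exists_eq_succ_of_ne_zero hn
    exact germsVanish_succ_pair hyx n
  | succ k ih =>
    obtain ⟨v, hvW, hv, hxv⟩ := exists_norm_eq_one_inner_sphereInclusion_eq_zero e hx (by omega)
    have equator := preimage_hemisphere_inter_neg e W (v := v)
    have hA := isConvexCell_preimage_hemisphere e W hv hvW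
    have hB := isConvexCell_preimage_hemisphere e W ((norm_neg v).trans hv) (W.neg_mem hvW)
    have vanishA :=
      germsVanish_germKernel_constSheaf_preimage_hemisphere (M := M) e hx hv hvW hxv
    have vanishB := germsVanish_germKernel_constSheaf_preimage_hemisphere (M := M) e hx
      ((norm_neg v).trans hv) (W.neg_mem hvW) (by rw [inner_neg_left, hxv, neg_zero])
    have hW' := finrank_inf_orthogonal_span_singleton hv hvW hW
    obtain ⟨iso, vanish⟩ := ih hW'
      ⟨hx, Submodule.mem_orthogonal_singleton_iff_inner_right.2 hxv⟩
      (Module.finite_of_finrank_eq_succ hW')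
    rw [← equator] at iso vanish
    rw [← preimage_hemisphere_union_neg e W (v := v)]
    refine ⟨iso.union hA.isClosed hB.isClosed (vanishA k) (vanishB k) (vanishA _) (vanishB _),
      fun n hn ↦ ?_⟩
    cases n with
    | zero => exact (vanishA 0).union_zero (vanishB 0)
    | succ n =>
      exact (vanishA _).union (vanishB _)
        ((vanish n fun h ↦ hn (congrArg _ h)).germsSplit hA.isClosed hB.isClosed)

end SphereCohomology

section Ext

open Abelian

lemma nonempty_ext_addEquiv_of_iso {C : Type*} [Category C] [Abelian C] [HasExt.{w} C] {A B : C}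
    (e : A ≅ B) (D : C) (n : ℕ) : Nonempty (Ext A D n ≃+ Ext B D n) :=
  ⟨{  toFun c := (Ext.mk₀ e.inv).comp c (zero_add n)
      invFun c := (Ext.mk₀ e.hom).comp c (zero_add n)
      left_inv c := by simp
      right_inv c := by simp
      map_add' c d := Ext.comp_add .. }⟩

theorem ext_constant_K_general {R : Type u} [Ring R] {X : TopCat.{u}}
    [HasExt.{w} (ModuleSheaf R X)] {E : Type*} [NormedAddCommGroup E] [InnerProductSpace ℝ E]
    (e : X ≃ₜ Metric.sphere (0 : E) 1) {m : ℕ} (hm : Module.finrank ℝ E = m + 1) (x : X)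
    (M : ModuleCat.{u} R) :
    Nonempty (Ext (constSheaf X (ModuleCat.of R R)) (germKernel (constSheaf X M) x) m ≃+ M) ∧
      ∀ n ≠ m, Subsingleton
        (Ext (constSheaf X (ModuleCat.of R R)) (germKernel (constSheaf X M) x) n) := by
  have := Module.finite_of_finrank_eq_succ hm
  have : ProperSpace E := FiniteDimensional.proper ℝ E
  have : CompactSpace X := e.symm.compactSpace
  have : T2Space X := e.symm.t2Space
  have sphere_eq : greatSphere e ⊤ = Set.univ := Set.eq_univ_of_forall fun _ ↦ trivial
  obtain ⟨iso, vanish⟩ := germs_germKernel_constSheaf_greatSphere (M := M) e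
    (finrank_top ℝ E ▸ hm) (show x ∈ greatSphere e ⊤ from trivial)
  rw [sphere_eq] at iso vanish
  have ext_equiv n := nonempty_ext_addEquiv_of_iso (freeSheafTopIso R X)
    (germKernel (constSheaf X M) x) n
  refine ⟨?_, fun n hn ↦ ?_⟩
  · obtain ⟨f⟩ := iso.nonempty_addEquiv
    obtain ⟨g⟩ := ext_equiv m
    exact ⟨(f.trans g).symm⟩
  · obtain ⟨g⟩ := ext_equiv n
    have := (vanish n hn).subsingleton
    exact g.symm.subsingleton

end Ext

section SU2

open Matrix ComplexConjugate

/-- The quaternion `v 0 + j v 1`, as a complex matrix with first column `v`. -/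
def quaternionMatrix (v : EuclideanSpace ℂ (Fin 2)) : Matrix (Fin 2) (Fin 2) ℂ :=
  !![v 0, -conj (v 1); v 1, conj (v 0)]

lemma continuous_quaternionMatrix : Continuous quaternionMatrix := by
  unfold quaternionMatrix
  fun_prop

lemma star_quaternionMatrix (v : EuclideanSpace ℂ (Fin 2)) :
    star (quaternionMatrix v) = (quaternionMatrix v).adjugate := by
  ext i j
  fin_cases i <;> fin_cases j <;> simp [quaternionMatrix, adjugate_fin_two]

lemma det_quaternionMatrix (v : EuclideanSpace ℂ (Fin 2)) :
    (quaternionMatrix v).det = (‖v‖ : ℂ) ^ 2 := by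
  rw [quaternionMatrix, det_fin_two_of, Complex.mul_conj', neg_mul, Complex.conj_mul',
    sub_neg_eq_add]
  exact_mod_cast ((EuclideanSpace.norm_sq_eq v).trans (Fin.sum_univ_two _)).symm

lemma quaternionMatrix_mem_unitaryGroup {v : EuclideanSpace ℂ (Fin 2)} (hv : ‖v‖ = 1) :
    quaternionMatrix v ∈ unitaryGroup (Fin 2) ℂ := by
  rw [mem_unitaryGroup_iff', star_quaternionMatrix, adjugate_mul, det_quaternionMatrix, hv,
    Complex.ofReal_one, one_pow, one_smul]

lemma quaternionMatrix_col_zero {A : Matrix (Fin 2) (Fin 2) ℂ} (hA : A ∈ unitaryGroup (Fin 2) ℂ)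
    (hdet : A.det = 1) : quaternionMatrix (WithLp.toLp 2 (A.col 0)) = A := by
  have star_eq : star A = A.adjugate := by
    rw [← inv_eq_left_inv (mem_unitaryGroup_iff'.1 hA), inv_def, hdet, Ring.inverse_one, one_smul]
  have h11 : conj (A 0 0) = A 1 1 := by
    simpa [adjugate_fin_two] using congrFun₂ star_eq 0 0
  have h01 : conj (A 1 0) = -A 0 1 := by
    simpa [adjugate_fin_two] using congrFun₂ star_eq 0 1
  ext i j
  fin_cases i <;> fin_cases j <;> simp [quaternionMatrix, h11, h01]

lemma norm_col_zero {A : Matrix (Fin 2) (Fin 2) ℂ} (hA : A ∈ unitaryGroup (Fin 2) ℂ)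
    (hdet : A.det = 1) : ‖WithLp.toLp 2 (A.col 0)‖ = 1 := by
  rw [← quaternionMatrix_col_zero hA hdet, det_quaternionMatrix] at hdet
  exact (pow_eq_one_iff_of_nonneg (norm_nonneg _) two_ne_zero).1 (by exact_mod_cast hdet)

/-- A matrix in `SU(2)` is determined by its first column, an arbitrary unit vector. -/
def su2HomeomorphSphere : SU2 ≃ₜ Metric.sphere (0 : EuclideanSpace ℂ (Fin 2)) 1 where
  toFun g := ⟨WithLp.toLp 2 (g.1.1.col 0), mem_sphere_zero_iff_norm.2 (norm_col_zero g.1.2 g.2)⟩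
  invFun v :=
    have hv := mem_sphere_zero_iff_norm.1 v.2
    ⟨⟨quaternionMatrix v, quaternionMatrix_mem_unitaryGroup hv⟩,
      (det_quaternionMatrix v).trans (by rw [hv, Complex.ofReal_one, one_pow])⟩
  left_inv g := Subtype.ext <| Subtype.ext <| quaternionMatrix_col_zero g.1.2 g.2
  right_inv v := by
    ext i
    fin_cases i <;> rfl
  continuous_toFun := by
    refine Continuous.subtype_mk ?_ _
    unfold Matrix.col
    fun_prop
  continuous_invFun := ((continuous_quaternionMatrix.comp continuous_subtype_val).subtype_mk
    fun v ↦ quaternionMatrix_mem_unitaryGroup (mem_sphere_zero_iff_norm.1 v.2)).subtype_mk _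

lemma finrank_real_euclideanSpace_complex_fin (n : ℕ) :
    Module.finrank ℝ (EuclideanSpace ℂ (Fin n)) = 2 * n := by
  rw [finrank_real_of_complex, finrank_euclideanSpace_fin]

end SU2

/-- `Ext^n(ℚ_G, K) ≅ ℚ` for `n = 3`, and `Ext^n(ℚ_G, K) = 0` otherwise. -/
theorem ext_constant_K :
    (Nonempty ((Abelian.Ext QG KK 3) ≃+ ℚ)) ∧
    (∀ n : ℕ, n ≠ 3 → Subsingleton (Abelian.Ext QG KK n)) :=
  ext_constant_K_general (X := GTop) su2HomeomorphSphere
    (finrank_real_euclideanSpace_complex_fin 2) 1 (ModuleCat.of ℚ ℚ)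

end
end
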